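/- Let (Ω, 𝒜, μ) be a σ-finite measure space and let {T_u : u ∈ ℝ₊^d} be a semigroup of positive Dunford–Schwartz operators (T_{u+v} = T_u T_v) that is L¹-continuous in the interior of ℝ₊^d, i.e. ‖T_u(f) − T_v(f)‖₁ → 0 as u → v, for every f ∈ L¹(μ) and every v with all coordinates strictly positive. Then for every f ∈ L¹(μ) the averages A_t(f) = t^{−d} ∫_{(0,t]^d} T_u(f) du (a Bochner integral in L¹(μ)) converge almost uniformly as t → ∞ to some f̂ ∈ L¹(μ). -/

import Mathlib

open MeasureTheory Filter Set ENNReal Topology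

variable {Ω : Type*} [MeasurableSpace Ω]

/-- `f` belongs to `L¹(μ) + L^∞(μ)`. -/
def MemL1pLinf (μ : Measure Ω) (f : Ω →ₘ[μ] ℝ) : Prop :=
  ∃ g h : Ω →ₘ[μ] ℝ, eLpNorm g 1 μ ≠ ∞ ∧ eLpNorm h ⊤ μ ≠ ∞ ∧ f = g + h

/-- A positive Dunford–Schwartz operator: linear and positive on `L¹+L^∞`,
contracting both the `L¹`- and `L^∞`-norms. -/
structure IsPosDS (μ : Measure Ω) (T : (Ω →ₘ[μ] ℝ) → (Ω →ₘ[μ] ℝ)) : Prop where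
  map_add : ∀ f g, MemL1pLinf μ f → MemL1pLinf μ g → T (f + g) = T f + T g
  map_smul : ∀ (c : ℝ) (f), MemL1pLinf μ f → T (c • f) = c • T f
  map_pos : ∀ f, MemL1pLinf μ f → 0 ≤ f → 0 ≤ T f
  norm_one : ∀ f, MemL1pLinf μ f → eLpNorm (T f) 1 μ ≤ eLpNorm f 1 μ
  norm_top : ∀ f, MemL1pLinf μ f → eLpNorm (T f) ⊤ μ ≤ eLpNorm f ⊤ μ

/-- The Cesàro averages `A_n(f) = (1/n) ∑_{k<n} T^k f`. -/
noncomputable def cesaro (μ : Measure Ω) (T : (Ω →ₘ[μ] ℝ) → (Ω →ₘ[μ] ℝ)) (n : ℕ)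
    (f : Ω →ₘ[μ] ℝ) : Ω →ₘ[μ] ℝ :=
  (n : ℝ)⁻¹ • ∑ k ∈ Finset.range n, T^[k] f

/-- Almost uniform convergence of a net `F` to `f`. -/
def AuTendsto {ι : Type*} (μ : Measure Ω) (l : Filter ι) (F : ι → Ω →ₘ[μ] ℝ)
    (f : Ω →ₘ[μ] ℝ) : Prop :=
  ∀ ε : ℝ, 0 < ε → ∃ E : Set Ω, MeasurableSet E ∧ μ Eᶜ ≤ ENNReal.ofReal ε ∧
    Tendsto (fun i => eLpNorm (E.indicator (⇑(F i - f))) ⊤ μ) l (𝓝 0)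

/-- `R_μ`: elements of `L¹+L^∞` whose distribution tails are finite. -/
def MemRmu (μ : Measure Ω) (f : Ω →ₘ[μ] ℝ) : Prop :=
  MemL1pLinf μ f ∧ ∀ lam : ℝ, 0 < lam → μ {ω | lam < |f ω|} < ∞

/-!
For commuting Dunford–Schwartz operators `S_1, …, S_d`, the average `A_n` of all the products
`S_1 ^ k_1 ⋯ S_d ^ k_d`, `k ∈ {0, …, n}^d`, is a polynomial in the `S_i`.

* *Maximal inequality.* By an idea of Brunel, for every `N` there is a polynomial `u` with
  nonnegative coefficients and `u(1, …, 1) ≤ 1` such that Cesàro averages of the powers of `u`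
  dominate the polynomials of `A_0, …, A_{N-1}` coefficientwise, up to a constant independent of
  `N`. Hopf's maximal inequality for the single operator `u(S_1, …, S_d)` thus gives weak type
  `(1, 1)` for `(A_n)`.
* *Invariance.* The polynomials `P` for which `A_n P(S_1, …, S_d)` is `O(1/n)` on bounded functions
  form an ideal. It contains every `X_i - 1`, hence every `P` with `P(1, …, 1) = 0`; in particular
  `A_n (1 - A_p)` is `O(1/n)` for each `p`.
* *Convergence.* Given a bounded `f`, let `h` almost minimise `∫ h²` over the functions with the
  same bound whose averages agree with those of `f` up to `O(1/n)`. Each `A_p h` is again in this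
  convex class, so by the parallelogram identity `A_p h` is close to `h` in `L²`. To make this
  uniform in `p` off a small set, compare `h` with a much better minimiser `h'`: the maximal
  inequality controls `A_p (h - h')` for all `p` at once, and finitely many `A_p h' - h'` are
  handled one by one, at a cost that vanishes as `h'` improves. Density of the bounded functions
  and the maximal inequality then cover all of `L¹(μ)`.

For the flow, the integral over `(0, n]^d` is a sum over unit cells, so that it is `n^d A_{n-1}`
applied to `∫_{(0, 1]^d} T_u f du`. If `f ≥ 0`, monotonicity of `t ↦ ∫_{(0, t]^d} T_u f du`
passes from integers to real `t`.
-/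

section Preliminaries

variable {μ : Measure Ω}

instance lpIsOrderedModule {p : ℝ≥0∞} : IsOrderedModule ℝ (Lp ℝ p μ) :=
  .of_smul_nonneg fun c hc f hf => by
    rw [← Lp.coeFn_nonneg] at hf ⊢
    filter_upwards [hf, Lp.coeFn_smul c f] with ω h₁ h₂
    exact h₂ ▸ mul_nonneg hc h₁

theorem L1_norm_eq_integral_of_nonneg {f : Lp ℝ 1 μ} (hf : 0 ≤ f) : ‖f‖ = ∫ ω, f ω ∂μ := by
  rw [L1.norm_eq_integral_norm]
  refine integral_congr_ae ?_
  filter_upwards [(Lp.coeFn_nonneg f).2 hf] with ω h using Real.norm_of_nonneg h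

theorem measure_exists_le_of_forall_bounded {p : ℕ → Ω → Prop} {C : ℝ≥0∞}
    (h : ∀ N, μ {ω | ∃ n ≤ N, p n ω} ≤ C) : μ {ω | ∃ n, p n ω} ≤ C := by
  have hunion : {ω | ∃ n, p n ω} = ⋃ N, {ω | ∃ n ≤ N, p n ω} := by
    ext ω
    simpa only [mem_iUnion] using
      ⟨fun ⟨n, hn⟩ => ⟨n, n, le_rfl, hn⟩, fun ⟨_, n, _, hn⟩ => ⟨n, hn⟩⟩
  have hmono : Monotone fun N => {ω | ∃ n ≤ N, p n ω} :=
    fun _ _ hNM _ ⟨n, hn, hp⟩ => ⟨n, hn.trans hNM, hp⟩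
  rw [hunion, hmono.measure_iUnion]
  exact iSup_le h

theorem measure_ge_le_ofReal_integral_div {ψ : Ω → ℝ} (hψ : Integrable ψ μ) (hψ0 : 0 ≤ᵐ[μ] ψ)
    {lam : ℝ} (hlam : 0 < lam) :
    μ {ω | lam ≤ ψ ω} ≤ ENNReal.ofReal ((∫ ω, ψ ω ∂μ) / lam) := by
  rw [ENNReal.ofReal_div_of_pos hlam, ENNReal.le_div_iff_mul_le (by simp [hlam]) (by simp),
    ofReal_integral_eq_lintegral_ofReal hψ hψ0, mul_comm]
  refine le_trans ?_ (mul_meas_ge_le_lintegral₀ hψ.aemeasurable.ennreal_ofReal (.ofReal lam))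
  gcongr with ω
  exact ENNReal.ofReal_le_ofReal

end Preliminaries

/-- A positive linear operator on `L¹(μ)` that contracts the `L¹`-norm and, expressed inside `L¹`
alone, the upper `L^∞`-bound. -/
structure IsDunfordSchwartz (μ : Measure Ω) (U : Lp ℝ 1 μ →L[ℝ] Lp ℝ 1 μ) : Prop where
  nonneg : ∀ f, 0 ≤ f → 0 ≤ U f
  norm_le : ∀ f, ‖U f‖ ≤ ‖f‖
  le_const : ∀ c : ℝ, 0 ≤ c → ∀ f : Lp ℝ 1 μ, (∀ᵐ ω ∂μ, f ω ≤ c) → ∀ᵐ ω ∂μ, U f ω ≤ c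

namespace IsDunfordSchwartz

variable {μ : Measure Ω} {U V : Lp ℝ 1 μ →L[ℝ] Lp ℝ 1 μ}

theorem monotone (hU : IsDunfordSchwartz μ U) : Monotone U := fun f g h => by
  simpa only [map_sub, sub_nonneg] using hU.nonneg (g - f) (sub_nonneg.2 h)

theorem abs_le (hU : IsDunfordSchwartz μ U) (f : Lp ℝ 1 μ) : |U f| ≤ U |f| :=
  abs_le'.2 ⟨hU.monotone (le_abs_self f), map_neg U f ▸ hU.monotone (neg_le_abs f)⟩

protected theorem one : IsDunfordSchwartz μ 1 :=
  ⟨fun _ h => h, fun _ => le_rfl, fun _ _ _ h => h⟩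

protected theorem mul (hU : IsDunfordSchwartz μ U) (hV : IsDunfordSchwartz μ V) :
    IsDunfordSchwartz μ (U * V) :=
  ⟨fun f h => hU.nonneg _ (hV.nonneg f h), fun f => (hU.norm_le _).trans (hV.norm_le f),
    fun c hc f h => hU.le_const c hc _ (hV.le_const c hc f h)⟩

protected theorem pow (hU : IsDunfordSchwartz μ U) (n : ℕ) : IsDunfordSchwartz μ (U ^ n) := by
  induction n with
  | zero => simpa only [pow_zero] using IsDunfordSchwartz.one
  | succ n ih => simpa only [pow_succ] using ih.mul hU

theorem sum_smul {ι : Type*} {s : Finset ι} {c : ι → ℝ} {W : ι → Lp ℝ 1 μ →L[ℝ] Lp ℝ 1 μ}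
    (hc : ∀ i ∈ s, 0 ≤ c i) (hs : ∑ i ∈ s, c i ≤ 1) (hW : ∀ i ∈ s, IsDunfordSchwartz μ (W i)) :
    IsDunfordSchwartz μ (∑ i ∈ s, c i • W i) := by
  have hsum : ∀ {a : ℝ}, 0 ≤ a → ∑ i ∈ s, c i * a ≤ a := fun ha => by
    simpa only [← Finset.sum_mul] using mul_le_of_le_one_left ha hs
  have happly : ∀ f, (∑ i ∈ s, c i • W i) f = ∑ i ∈ s, c i • W i f := fun f => by
    simp only [_root_.sum_apply, _root_.smul_apply]
  refine ⟨fun f hf => ?_, fun f => ?_, fun a ha f hf => ?_⟩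
  · rw [happly]
    exact Finset.sum_nonneg fun i hi => smul_nonneg (hc i hi) ((hW i hi).nonneg f hf)
  · rw [happly]
    refine (norm_sum_le_of_le s fun i hi => ?_).trans (hsum (norm_nonneg f))
    rw [norm_smul, Real.norm_of_nonneg (hc i hi)]
    exact mul_le_mul_of_nonneg_left ((hW i hi).norm_le f) (hc i hi)
  · rw [happly]
    have hterm : ∀ᵐ ω ∂μ, ∀ i ∈ s, (c i • W i f : Lp ℝ 1 μ) ω ≤ c i * a := by
      rw [Filter.eventually_all_finset s]
      intro i hi
      filter_upwards [(hW i hi).le_const a ha f hf, Lp.coeFn_smul (c i) (W i f)] with ω h₁ h₂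
      exact h₂ ▸ mul_le_mul_of_nonneg_left h₁ (hc i hi)
    filter_upwards [hterm, Lp.coeFn_finsetSum s fun i => c i • W i f] with ω h₁ h₂
    rw [h₂, Finset.sum_apply]
    exact (Finset.sum_le_sum h₁).trans (hsum ha)

end IsDunfordSchwartz

section HopfMaximalInequality

variable {μ : Measure Ω}

theorem lipschitzWith_max_sub_zero (c : ℝ) : LipschitzWith 1 fun x : ℝ => max (x - c) 0 :=
  (LipschitzWith.of_dist_le_mul fun x y => by simp [Real.dist_eq]).max_const 0

/-- The excess `(f - c)⁺` of `f ∈ L¹(μ)` over a level `c ≥ 0`. The constant `c` need not belong to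
`L¹(μ)`, so this is not a lattice expression in `L¹(μ)`. -/
noncomputable def excess {c : ℝ} (hc : 0 ≤ c) (f : Lp ℝ 1 μ) : Lp ℝ 1 μ :=
  (lipschitzWith_max_sub_zero c).compLp (by simp [hc]) f

theorem coeFn_excess {c : ℝ} (hc : 0 ≤ c) (f : Lp ℝ 1 μ) :
    excess hc f =ᵐ[μ] fun ω => max (f ω - c) 0 :=
  LipschitzWith.coeFn_compLp (lipschitzWith_max_sub_zero c) (by simp [hc]) f

theorem excess_nonneg {c : ℝ} (hc : 0 ≤ c) (f : Lp ℝ 1 μ) : 0 ≤ excess hc f := by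
  rw [← Lp.coeFn_nonneg]
  filter_upwards [coeFn_excess hc f] with ω h
  exact h ▸ le_max_right _ _

theorem excess_mono {c : ℝ} (hc : 0 ≤ c) : Monotone (excess hc : Lp ℝ 1 μ → Lp ℝ 1 μ) := by
  intro f g hfg
  rw [← Lp.coeFn_le] at hfg ⊢
  filter_upwards [coeFn_excess hc f, coeFn_excess hc g, hfg] with ω hf hg h
  rw [hf, hg]
  gcongr

/-- The auxiliary sequence `M₀ = 0`, `M_{n+1} = (f + U M_n - λ)⁺` of the proof of Hopf's maximal
inequality, which dominates `∑_{j<m} U^j f - m λ` for all `m ≤ n`. -/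
noncomputable def hopfExcess (U : Lp ℝ 1 μ →L[ℝ] Lp ℝ 1 μ) (f : Lp ℝ 1 μ) {lam : ℝ}
    (hlam : 0 ≤ lam) : ℕ → Lp ℝ 1 μ
  | 0 => 0
  | n + 1 => excess hlam (f + U (hopfExcess U f hlam n))

variable {U : Lp ℝ 1 μ →L[ℝ] Lp ℝ 1 μ} {f : Lp ℝ 1 μ} {lam : ℝ}

theorem hopfExcess_nonneg (hlam : 0 ≤ lam) : ∀ n, 0 ≤ hopfExcess U f hlam n
  | 0 => le_rfl
  | _ + 1 => excess_nonneg hlam _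

theorem hopfExcess_monotone (hU : IsDunfordSchwartz μ U) (hlam : 0 ≤ lam) :
    Monotone (hopfExcess U f hlam) := by
  refine monotone_nat_of_le_succ fun n => ?_
  induction n with
  | zero => exact hopfExcess_nonneg hlam 1
  | succ n ih => exact excess_mono hlam (add_le_add_right (hU.monotone ih) f)

theorem ergodicSum_sub_hopfExcess_le (hU : IsDunfordSchwartz μ U) (hlam : 0 ≤ lam) (m : ℕ) :
    ∀ᵐ ω ∂μ, (∑ j ∈ Finset.range m, (U ^ j) f - hopfExcess U f hlam m : Lp ℝ 1 μ) ω ≤ m * lam := by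
  induction m with
  | zero =>
    filter_upwards [Lp.coeFn_zero ℝ 1 μ] with ω h
    simp only [hopfExcess, Finset.range_zero, Finset.sum_empty, sub_zero, Nat.cast_zero, zero_mul]
    exact h.le
  | succ m ih =>
    set G := ∑ j ∈ Finset.range m, (U ^ j) f with hG
    have hGsucc : ∑ j ∈ Finset.range (m + 1), (U ^ j) f = f + U G := by
      simp only [hG, Finset.sum_range_succ', map_sum, pow_succ', pow_zero, add_comm]
      rfl
    have hUih := hU.le_const _ (by positivity) _ ih
    rw [map_sub] at hUih
    rw [hGsucc, hopfExcess]
    set M := hopfExcess U f hlam m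
    filter_upwards [hUih, Lp.coeFn_sub (U G) (U M), coeFn_excess hlam (f + U M),
      Lp.coeFn_sub (f + U G) (excess hlam (f + U M)), Lp.coeFn_add f (U G),
      Lp.coeFn_add f (U M)] with ω h₁ h₂ h₃ h₄ h₅ h₆
    rw [h₂] at h₁
    rw [h₄, Pi.sub_apply, h₅, h₃, h₆]
    simp only [Pi.add_apply, Pi.sub_apply] at *
    have := le_max_left (f ω + U M ω - lam) 0
    push_cast
    linarith

theorem hopfExcess_drift (hU : IsDunfordSchwartz μ U) (hf : 0 ≤ f) (hlam : 0 ≤ lam) (n : ℕ) :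
    ∀ᵐ ω ∂μ, 0 ≤ (f + U (hopfExcess U f hlam n) - hopfExcess U f hlam n : Lp ℝ 1 μ) ω ∧
      (0 < hopfExcess U f hlam n ω →
        lam ≤ (f + U (hopfExcess U f hlam n) - hopfExcess U f hlam n : Lp ℝ 1 μ) ω) := by
  have hsucc := hopfExcess_monotone (f := f) hU hlam n.le_succ
  have hM0 := hopfExcess_nonneg (U := U) (f := f) hlam n
  rw [hopfExcess] at hsucc
  set M := hopfExcess U f hlam n
  filter_upwards [(Lp.coeFn_nonneg _).2 hf, (Lp.coeFn_nonneg _).2 hM0,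
    (Lp.coeFn_nonneg _).2 (hU.nonneg _ hM0), (Lp.coeFn_le _ _).2 hsucc,
    coeFn_excess hlam (f + U M), Lp.coeFn_sub (f + U M) M,
    Lp.coeFn_add f (U M)] with ω hf hM hUM hle hex hsub hadd
  rw [hex, hadd] at hle
  rw [hsub, Pi.sub_apply, hadd]
  simp only [Pi.add_apply, Pi.zero_apply] at hf hM hUM hle ⊢
  rcases le_max_iff.1 hle with h | h
  · exact ⟨by linarith, fun _ => by linarith⟩
  · exact ⟨by linarith, fun hpos => absurd hpos (by linarith)⟩

theorem measure_hopfExcess_pos_le (hU : IsDunfordSchwartz μ U) (hf : 0 ≤ f) (hlam : 0 < lam)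
    (n : ℕ) : μ {ω | 0 < hopfExcess U f hlam.le n ω} ≤ ENNReal.ofReal (‖f‖ / lam) := by
  have hdrift := hopfExcess_drift hU hf hlam.le n
  have hM0 := hopfExcess_nonneg (U := U) (f := f) hlam.le n
  set M := hopfExcess U f hlam.le n
  have hint : ∫ ω, (f + U M - M : Lp ℝ 1 μ) ω ∂μ ≤ ‖f‖ := by
    simp only [← L1.integral_eq_integral, L1.integral_sub, L1.integral_add]
    simp only [L1.integral_eq_integral, ← L1_norm_eq_integral_of_nonneg, hf, hM0,
      hU.nonneg _ hM0]
    linarith [hU.norm_le M]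
  calc μ {ω | 0 < M ω} ≤ μ {ω | lam ≤ (f + U M - M : Lp ℝ 1 μ) ω} :=
        measure_mono_ae (hdrift.mono fun _ h => h.2)
    _ ≤ ENNReal.ofReal ((∫ ω, (f + U M - M : Lp ℝ 1 μ) ω ∂μ) / lam) :=
        measure_ge_le_ofReal_integral_div (L1.integrable_coeFn _) (hdrift.mono fun _ h => h.1) hlam
    _ ≤ ENNReal.ofReal (‖f‖ / lam) := by gcongr

theorem hopf_maximal_inequality (hU : IsDunfordSchwartz μ U) (hf : 0 ≤ f) (hlam : 0 < lam) :
    μ {ω | ∃ m : ℕ, m * lam < (∑ j ∈ Finset.range m, (U ^ j) f : Lp ℝ 1 μ) ω}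
      ≤ ENNReal.ofReal (‖f‖ / lam) := by
  refine measure_exists_le_of_forall_bounded fun N => ?_
  refine (measure_mono_ae ?_).trans (measure_hopfExcess_pos_le hU hf hlam N)
  have hle := ae_all_iff.2 (ergodicSum_sub_hopfExcess_le (f := f) hU hlam.le)
  have hsub := ae_all_iff.2 fun m : ℕ =>
    Lp.coeFn_sub (∑ j ∈ Finset.range m, (U ^ j) f) (hopfExcess U f hlam.le m)
  have hmono : ∀ᵐ ω ∂μ, ∀ m ∈ Finset.range (N + 1),
      hopfExcess U f hlam.le m ω ≤ hopfExcess U f hlam.le N ω :=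
    (Filter.eventually_all_finset _).2 fun m hm => (Lp.coeFn_le _ _).2 <|
      hopfExcess_monotone hU hlam.le (Finset.mem_range_succ_iff.1 hm)
  filter_upwards [hle, hsub, hmono] with ω hle hsub hmono
  rintro ⟨m, hm, hlt⟩
  have hle := hle m
  rw [hsub m, Pi.sub_apply] at hle
  have hmono := hmono m (Finset.mem_range_succ_iff.2 hm)
  change 0 < hopfExcess U f hlam.le N ω
  linarith

end HopfMaximalInequality

section BrunelWeights

theorem pow_succ_sub_pow_succ_le {u v : ℝ} (hu : 0 ≤ u) (huv : u ≤ v) (n : ℕ) :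
    v ^ (n + 1) - u ^ (n + 1) ≤ (n + 1) * (v - u) * v ^ n := by
  have h := (le_abs_self _).trans (abs_pow_sub_pow_le v u (n + 1))
  rw [abs_of_nonneg (sub_nonneg.2 huv), abs_of_nonneg hu, abs_of_nonneg (hu.trans huv),
    max_eq_left huv, Nat.add_sub_cancel] at h
  push_cast at h
  linarith

theorem sub_mul_pow_le_pow_succ_sub_pow_succ {u v : ℝ} (hu : 0 ≤ u) (huv : u ≤ v) (n : ℕ) :
    (v - u) * v ^ n ≤ v ^ (n + 1) - u ^ (n + 1) := by
  have := mul_le_mul_of_nonneg_left (pow_le_pow_left₀ hu huv n) hu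
  linarith [pow_succ' v n, pow_succ' u n]

theorem pow_succ_div_le_sum_pow (d n : ℕ) :
    (n : ℝ) ^ (d + 1) / (d + 1) ≤ ∑ j ∈ Finset.range n, ((j : ℝ) + 1) ^ d := by
  rw [div_le_iff₀ (by positivity), Finset.sum_mul]
  calc (n : ℝ) ^ (d + 1)
      = ∑ j ∈ Finset.range n, (((j + 1 : ℕ) : ℝ) ^ (d + 1) - (j : ℝ) ^ (d + 1)) := by
        rw [Finset.sum_range_sub fun j : ℕ => (j : ℝ) ^ (d + 1)]
        simp
    _ ≤ ∑ j ∈ Finset.range n, ((j : ℝ) + 1) ^ d * (d + 1) := Finset.sum_le_sum fun j _ => by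
        have := pow_succ_sub_pow_succ_le (Nat.cast_nonneg j) (le_add_of_nonneg_right one_pos.le) d
        push_cast
        linarith

/-- `r_k = (k + 1)^{1/(d+2)}`, the scale governing Brunel's weights in dimension `d + 1`. -/
noncomputable def brunelRoot (d k : ℕ) : ℝ := ((k : ℝ) + 1) ^ (((d + 2 : ℕ) : ℝ)⁻¹)

theorem brunelRoot_pow (d k : ℕ) : brunelRoot d k ^ (d + 2) = k + 1 :=
  Real.rpow_inv_natCast_pow (by positivity) (by omega)

theorem one_le_brunelRoot (d k : ℕ) : 1 ≤ brunelRoot d k :=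
  Real.one_le_rpow (by linarith [Nat.cast_nonneg (α := ℝ) k]) (by positivity)

theorem brunelRoot_pos (d k : ℕ) : 0 < brunelRoot d k := one_pos.trans_le (one_le_brunelRoot d k)

theorem brunelRoot_monotone (d : ℕ) : Monotone (brunelRoot d) := fun k l h =>
  Real.rpow_le_rpow (by positivity) (by gcongr) (by positivity)

theorem brunelRoot_le_two_mul (d : ℕ) {k l : ℕ} (h : l + 1 ≤ 2 * (k + 1)) :
    brunelRoot d l ≤ 2 * brunelRoot d k := by
  refine le_of_pow_le_pow_left₀ (n := d + 2) (by omega) (by linarith [brunelRoot_pos d k]) ?_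
  rw [mul_pow, brunelRoot_pow, brunelRoot_pow]
  calc (l : ℝ) + 1 ≤ 2 * (k + 1) := by exact_mod_cast h
    _ ≤ 2 ^ (d + 2) * (k + 1) := by
        gcongr
        exact le_self_pow₀ one_le_two (by omega)

theorem one_le_brunelRoot_increment (d k : ℕ) :
    1 ≤ (d + 2) * (brunelRoot d (k + 1) - brunelRoot d k) * brunelRoot d (k + 1) ^ (d + 1) := by
  have := pow_succ_sub_pow_succ_le (brunelRoot_pos d k).le (brunelRoot_monotone d k.le_succ) (d + 1)
  rw [brunelRoot_pow, brunelRoot_pow] at this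
  push_cast at this
  linarith

/-- Brunel's weights `a_k = 1/r_k - 1/r_{k+1}`, a telescoping probability distribution on `ℕ` with
`a_k` of order `k^{-1-1/(d+2)}`. -/
noncomputable def brunelWeight (d k : ℕ) : ℝ := (brunelRoot d k)⁻¹ - (brunelRoot d (k + 1))⁻¹

theorem brunelWeight_nonneg (d k : ℕ) : 0 ≤ brunelWeight d k :=
  sub_nonneg.2 (inv_anti₀ (brunelRoot_pos d k) (brunelRoot_monotone d k.le_succ))

theorem sum_brunelWeight (d n : ℕ) :
    ∑ k ∈ Finset.range n, brunelWeight d k = 1 - (brunelRoot d n)⁻¹ := by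
  simp only [brunelWeight]
  rw [Finset.sum_range_sub']
  simp [brunelRoot]

theorem le_brunelWeight (d k : ℕ) :
    1 / ((d + 2) * brunelRoot d (k + 1) ^ (d + 3)) ≤ brunelWeight d k := by
  have hinc := one_le_brunelRoot_increment d k
  have hu := brunelRoot_pos d k
  have hv := brunelRoot_pos d (k + 1)
  have huv := brunelRoot_monotone d k.le_succ
  rw [brunelWeight]
  set u := brunelRoot d k
  set v := brunelRoot d (k + 1)
  calc 1 / ((d + 2) * v ^ (d + 3)) ≤ (v - u) / (v * v) := by
        rw [div_le_div_iff₀ (by positivity) (by positivity)]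
        calc 1 * (v * v) ≤ (d + 2) * (v - u) * v ^ (d + 1) * (v * v) := by gcongr
          _ = (v - u) * ((d + 2) * v ^ (d + 3)) := by ring
    _ ≤ (v - u) / (u * v) :=
        div_le_div_of_nonneg_left (sub_nonneg.2 huv) (by positivity) (by gcongr)
    _ = u⁻¹ - v⁻¹ := by field_simp

theorem le_brunelWeight_of_le (d : ℕ) {l k : ℕ} (h : l ≤ k) :
    1 / ((d + 2) * 2 ^ (d + 3)) / brunelRoot d k ^ (d + 3) ≤ brunelWeight d l := by
  have hroot : brunelRoot d (l + 1) ≤ 2 * brunelRoot d k := brunelRoot_le_two_mul d (by omega)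
  have hpos := brunelRoot_pos d (l + 1)
  calc 1 / ((d + 2) * 2 ^ (d + 3)) / brunelRoot d k ^ (d + 3)
      = 1 / ((d + 2) * (2 * brunelRoot d k) ^ (d + 3)) := by rw [div_div, mul_assoc, ← mul_pow]
    _ ≤ 1 / ((d + 2) * brunelRoot d (l + 1) ^ (d + 3)) := by gcongr
    _ ≤ brunelWeight d l := le_brunelWeight d l

theorem sum_mul_brunelWeight_le (d n : ℕ) :
    ∑ l ∈ Finset.range n, (l : ℝ) * brunelWeight d l ≤ (d + 2) * brunelRoot d n ^ (d + 1) := by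
  suffices h : ∑ l ∈ Finset.range n, (l : ℝ) * brunelWeight d l + n * (brunelRoot d n)⁻¹
      ≤ (d + 2) * brunelRoot d n ^ (d + 1) from
    (le_add_of_nonneg_right (by have := brunelRoot_pos d n; positivity)).trans h
  induction n with
  | zero =>
    have := brunelRoot_pos d 0
    simp only [Finset.range_zero, Finset.sum_empty, Nat.cast_zero, zero_mul, add_zero]
    positivity
  | succ n ih =>
    rw [Finset.sum_range_succ, brunelWeight]
    have hinc := one_le_brunelRoot_increment d n
    have hpow := sub_mul_pow_le_pow_succ_sub_pow_succ (brunelRoot_pos d n).le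
      (brunelRoot_monotone d n.le_succ) d
    have hv := brunelRoot_pos d (n + 1)
    set u := brunelRoot d n
    set v := brunelRoot d (n + 1)
    have hinv : v⁻¹ ≤ (d + 2) * (v ^ (d + 1) - u ^ (d + 1)) :=
      calc v⁻¹ ≤ (d + 2) * ((v - u) * v ^ d) := by
            rw [inv_le_iff_one_le_mul₀ hv]
            exact hinc.trans_eq (by ring)
        _ ≤ (d + 2) * (v ^ (d + 1) - u ^ (d + 1)) := by gcongr
    push_cast
    linarith

end BrunelWeights

section BrunelPolynomial

open Polynomial

/-- The polynomials over `ℝ` with nonnegative coefficients. -/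
def nonnegCoeffs : Subsemiring ℝ[X] where
  carrier := {p | ∀ k, 0 ≤ p.coeff k}
  zero_mem' _ := le_of_eq (coeff_zero _).symm
  one_mem' k := by rw [coeff_one]; split_ifs <;> norm_num
  add_mem' hp hq k := by rw [coeff_add]; exact add_nonneg (hp k) (hq k)
  mul_mem' hp hq k := by
    rw [coeff_mul]
    exact Finset.sum_nonneg fun _ _ => mul_nonneg (hp _) (hq _)

theorem add_pow_succ_sub_mem_nonnegCoeffs {p q : ℝ[X]} (hp : p ∈ nonnegCoeffs)
    (hq : q ∈ nonnegCoeffs) (m : ℕ) :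
    (p + q) ^ (m + 1) - (m + 1 : ℕ) * (p ^ m * q) ∈ nonnegCoeffs := by
  rw [add_pow, ← Finset.add_sum_erase _ _ (Finset.mem_range.2 (by omega : m < m + 1 + 1)),
    Nat.choose_succ_self_right, Nat.add_sub_cancel_left, pow_one, mul_comm (p ^ m * q),
    add_sub_cancel_left]
  exact sum_mem fun j _ => mul_mem (mul_mem (pow_mem hp _) (pow_mem hq _)) (natCast_mem _ _)

/-- Markov's inequality for the mass distribution given by the coefficients of a polynomial. -/
theorem eval_one_sub_derivative_div_le_sum_coeff {p : ℝ[X]} (hp : p ∈ nonnegCoeffs) (n : ℕ) :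
    p.eval 1 - (derivative p).eval 1 / (n + 1) ≤ ∑ r ∈ Finset.range (n + 1), p.coeff r := by
  set K := p.natDegree + 1 + (n + 1)
  have hmass : p.eval 1 = ∑ r ∈ Finset.range (n + 1), p.coeff r
      + ∑ r ∈ Finset.Ico (n + 1) K, p.coeff r := by
    rw [Finset.sum_range_add_sum_Ico _ (by omega), eval_eq_sum_range' (n := K) (by omega)]
    simp
  have hmean : (derivative p).eval 1 = ∑ r ∈ Finset.range K, p.coeff r * r := by
    rw [derivative_eval, sum_over_range' _ (by simp) K (by omega)]
    simp
  have htail : (∑ r ∈ Finset.Ico (n + 1) K, p.coeff r) * (n + 1)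
      ≤ ∑ r ∈ Finset.range K, p.coeff r * r := by
    rw [Finset.sum_mul]
    calc ∑ r ∈ Finset.Ico (n + 1) K, p.coeff r * (n + 1)
        ≤ ∑ r ∈ Finset.Ico (n + 1) K, p.coeff r * r := Finset.sum_le_sum fun r hr =>
          mul_le_mul_of_nonneg_left (by exact_mod_cast (Finset.mem_Ico.1 hr).1) (hp r)
      _ ≤ ∑ r ∈ Finset.range K, p.coeff r * r :=
          Finset.sum_le_sum_of_subset_of_nonneg
            (fun r hr => Finset.mem_range.2 (Finset.mem_Ico.1 hr).2)
            fun r _ _ => mul_nonneg (hp r) r.cast_nonneg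
  rw [hmass, hmean, sub_le_iff_le_add]
  gcongr
  rwa [le_div_iff₀ (by positivity)]

/-- `∑_{l ∈ s} a_l X^l`, with Brunel's weights `a_l` in dimension `d + 1`. -/
noncomputable def brunelPoly (d : ℕ) (s : Finset ℕ) : ℝ[X] := ∑ l ∈ s, C (brunelWeight d l) * X ^ l

theorem coeff_brunelPoly (d : ℕ) (s : Finset ℕ) (k : ℕ) :
    (brunelPoly d s).coeff k = if k ∈ s then brunelWeight d k else 0 := by
  rw [brunelPoly, finsetSum_coeff]
  simp [coeff_X_pow]

theorem brunelPoly_mem_nonnegCoeffs (d : ℕ) (s : Finset ℕ) : brunelPoly d s ∈ nonnegCoeffs := by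
  intro k
  rw [coeff_brunelPoly]
  split_ifs
  exacts [brunelWeight_nonneg d k, le_rfl]

theorem eval_one_brunelPoly_range (d n : ℕ) :
    (brunelPoly d (Finset.range n)).eval 1 = 1 - (brunelRoot d n)⁻¹ := by
  simp [brunelPoly, eval_finsetSum, ← sum_brunelWeight]

theorem eval_one_derivative_brunelPoly (d : ℕ) (s : Finset ℕ) :
    (derivative (brunelPoly d s)).eval 1 = ∑ l ∈ s, (l : ℝ) * brunelWeight d l := by
  rw [brunelPoly, derivative_sum, eval_finsetSum]
  refine Finset.sum_congr rfl fun l _ => ?_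
  rw [derivative_C_mul_X_pow, eval_C_mul, eval_pow, eval_X, one_pow, mul_one, mul_comm]

theorem half_le_sum_coeff_brunelPoly_pow (d : ℕ) {n L m : ℕ} (hn : L ≤ n)
    (hm : 2 * (d + 3) * (m : ℝ) ≤ brunelRoot d L) :
    1 / 2 ≤ ∑ r ∈ Finset.range (n + 1), (brunelPoly d (Finset.range L) ^ m).coeff r := by
  have hρ := brunelRoot_pos d L
  have hLpow := brunelRoot_pow d L
  have hinv : (brunelRoot d L)⁻¹ ≤ 1 := inv_le_one_of_one_le₀ (one_le_brunelRoot d L)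
  have hmean := sum_mul_brunelWeight_le d L
  rw [← eval_one_derivative_brunelPoly] at hmean
  have hmean0 : 0 ≤ (derivative (brunelPoly d (Finset.range L))).eval 1 := by
    rw [eval_one_derivative_brunelPoly]
    exact Finset.sum_nonneg fun l _ => mul_nonneg l.cast_nonneg (brunelWeight_nonneg d l)
  refine le_trans ?_ (eval_one_sub_derivative_div_le_sum_coeff
    (pow_mem (brunelPoly_mem_nonnegCoeffs d _) m) n)
  rw [derivative_pow, eval_mul, eval_mul, eval_pow, eval_pow, eval_C, eval_one_brunelPoly_range]
  set ρ := brunelRoot d L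
  set τ := (derivative (brunelPoly d (Finset.range L))).eval 1
  have hρ0 : 0 ≤ ρ⁻¹ := by positivity
  have hmass : 1 - m * ρ⁻¹ ≤ (1 - ρ⁻¹) ^ m := by
    simpa [sub_eq_add_neg] using one_add_mul_le_pow (a := -ρ⁻¹) (by linarith) m
  have htail : m * (1 - ρ⁻¹) ^ (m - 1) * τ / (n + 1) ≤ m * (d + 2) * ρ⁻¹ :=
    calc m * (1 - ρ⁻¹) ^ (m - 1) * τ / (n + 1)
        ≤ m * 1 * ((d + 2) * ρ ^ (d + 1)) / (L + 1) := by
          gcongr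
          exact pow_le_one₀ (by linarith) (by linarith)
      _ = m * (d + 2) * ρ⁻¹ := by rw [← hLpow]; field_simp; ring
  have hsmall : (d + 3) * m * ρ⁻¹ ≤ 1 / 2 := by
    rw [← div_eq_mul_inv, div_le_iff₀ hρ]
    linarith
  linarith

theorem le_coeff_brunelPoly_pow_succ (d : ℕ) {n k m : ℕ} (hk : k < n)
    (hm : 4 * (d + 3) * (m : ℝ) ≤ brunelRoot d k) :
    (m + 1) * (1 / ((d + 2) * 2 ^ (d + 4)) / brunelRoot d k ^ (d + 3))
      ≤ (brunelPoly d (Finset.range n) ^ (m + 1)).coeff k := by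
  set L := k / 2
  set p := brunelPoly d (Finset.range L)
  set q := brunelPoly d (Finset.Ico L n)
  have hp : p ∈ nonnegCoeffs := brunelPoly_mem_nonnegCoeffs d _
  have hq : q ∈ nonnegCoeffs := brunelPoly_mem_nonnegCoeffs d _
  have hsplit : brunelPoly d (Finset.range n) = p + q :=
    (Finset.sum_range_add_sum_Ico _ (by omega)).symm
  have hbinom := add_pow_succ_sub_mem_nonnegCoeffs hp hq m k
  rw [coeff_sub, ← C_eq_natCast, coeff_C_mul, ← hsplit] at hbinom
  set c : ℝ := 1 / ((d + 2) * 2 ^ (d + 3)) / brunelRoot d k ^ (d + 3) with hc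
  have hc0 : 0 ≤ c := by have := brunelRoot_pos d k; positivity
  have hhalf : 1 / 2 ≤ ∑ r ∈ Finset.range (k - L + 1), (p ^ m).coeff r := by
    have := brunelRoot_le_two_mul d (k := L) (l := k) (by omega)
    exact half_le_sum_coeff_brunelPoly_pow d (by omega) (by linarith)
  have hconv : 1 / 2 * c ≤ (p ^ m * q).coeff k := by
    rw [coeff_mul, Finset.Nat.sum_antidiagonal_eq_sum_range_succ_mk]
    calc 1 / 2 * c ≤ ∑ r ∈ Finset.range (k - L + 1), (p ^ m).coeff r * c := by
          rw [← Finset.sum_mul]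
          gcongr
      _ ≤ ∑ r ∈ Finset.range (k - L + 1), (p ^ m).coeff r * q.coeff (k - r) :=
          Finset.sum_le_sum fun r hr => by
            have hr := Finset.mem_range.1 hr
            rw [coeff_brunelPoly, if_pos (Finset.mem_Ico.2 ⟨by omega, by omega⟩)]
            exact mul_le_mul_of_nonneg_left (le_brunelWeight_of_le d (by omega)) (pow_mem hp m r)
      _ ≤ ∑ r ∈ Finset.range k.succ, (p ^ m).coeff r * q.coeff (k - r) :=
          Finset.sum_le_sum_of_subset_of_nonneg (Finset.range_mono (by omega))
            fun r _ _ => mul_nonneg (pow_mem hp m r) (hq _)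
  calc (m + 1) * (1 / ((d + 2) * 2 ^ (d + 4)) / brunelRoot d k ^ (d + 3))
      = (m + 1 : ℕ) * (1 / 2 * c) := by
        have := brunelRoot_pos d k
        rw [hc, pow_succ (2 : ℝ) (d + 3)]
        push_cast
        field_simp
    _ ≤ (m + 1 : ℕ) * (p ^ m * q).coeff k := by gcongr
    _ ≤ (brunelPoly d (Finset.range n) ^ (m + 1)).coeff k := sub_nonneg.1 hbinom

end BrunelPolynomial

section BrunelDomination

open Polynomial

theorem exists_le_prod_coeff_brunelPoly_pow (d : ℕ) :
    ∃ c : ℝ, 0 < c ∧ ∀ {n j : ℕ} {k : Fin (d + 1) → ℕ} {i₀ : Fin (d + 1)}, (∀ i, k i < n) →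
      (∀ i, k i₀ ≤ k i) → 4 * (d + 3) * (j : ℝ) ≤ brunelRoot d (k i₀) →
      ((j : ℝ) + 1) ^ (d + 1) * (c / ∏ i, brunelRoot d (k i) ^ (d + 3))
        ≤ ∏ i, (brunelPoly d (Finset.range n) ^ (j + 1)).coeff (k i) := by
  set b : ℝ := 1 / ((d + 2) * 2 ^ (d + 4))
  refine ⟨b ^ (d + 1), by positivity, fun {n j k i₀} hk hi₀ hj => ?_⟩
  calc ((j : ℝ) + 1) ^ (d + 1) * (b ^ (d + 1) / ∏ i, brunelRoot d (k i) ^ (d + 3))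
      = ∏ i, (j + 1) * (b / brunelRoot d (k i) ^ (d + 3)) := by
        simp [Finset.prod_mul_distrib, Finset.prod_div_distrib]
    _ ≤ ∏ i, (brunelPoly d (Finset.range n) ^ (j + 1)).coeff (k i) :=
        Finset.prod_le_prod (fun i _ => by have := brunelRoot_pos d (k i); positivity) fun i _ =>
          le_coeff_brunelPoly_pow_succ d (hk i) (hj.trans (brunelRoot_monotone d (hi₀ i)))

theorem exists_le_sum_prod_coeff_brunelPoly_pow (d : ℕ) :
    ∃ c : ℝ, 0 < c ∧ ∀ {n : ℕ} {k : Fin (d + 1) → ℕ} {i₀ : Fin (d + 1)}, (∀ i, k i < n) →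
      (∀ i, k i₀ ≤ k i) →
      c * brunelRoot d (k i₀) ^ (d + 2) / ∏ i, brunelRoot d (k i) ^ (d + 3)
        ≤ ∑ j ∈ Finset.range (⌊brunelRoot d (k i₀)⌋₊ + 2),
          ∏ i, (brunelPoly d (Finset.range n) ^ j).coeff (k i) := by
  obtain ⟨c, hc, hprod⟩ := exists_le_prod_coeff_brunelPoly_pow d
  set E : ℝ := 4 * (d + 3)
  have hE1 : 1 ≤ E := by linarith [d.cast_nonneg (α := ℝ)]
  refine ⟨c / (E ^ (d + 2) * (d + 2)), by positivity, fun {n k i₀} hk hi₀ => ?_⟩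
  set p := brunelRoot d (k i₀)
  set Q := ∏ i, brunelRoot d (k i) ^ (d + 3)
  have hp : 0 < p := brunelRoot_pos d _
  have hQ : 0 < Q := Finset.prod_pos fun i _ => pow_pos (brunelRoot_pos d _) _
  have hterm : ∀ j, 0 ≤ ∏ i, (brunelPoly d (Finset.range n) ^ j).coeff (k i) := fun j =>
    Finset.prod_nonneg fun i _ => pow_mem (brunelPoly_mem_nonnegCoeffs d _) j _
  set J := ⌊p / E⌋₊ + 1
  have hJp : p / E ≤ J := by exact_mod_cast (Nat.lt_floor_add_one (p / E)).le
  have hJle : J ≤ ⌊p⌋₊ + 1 := Nat.succ_le_succ (Nat.floor_le_floor (div_le_self hp.le hE1))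
  calc c / (E ^ (d + 2) * (d + 2)) * p ^ (d + 2) / Q
      = (p / E) ^ (d + 1 + 1) / ((d + 1 : ℕ) + 1) * (c / Q) := by
        rw [div_pow]; push_cast; field_simp; ring
    _ ≤ (J : ℝ) ^ (d + 1 + 1) / ((d + 1 : ℕ) + 1) * (c / Q) := by gcongr
    _ ≤ (∑ j ∈ Finset.range J, ((j : ℝ) + 1) ^ (d + 1)) * (c / Q) := by
        gcongr
        exact pow_succ_div_le_sum_pow (d + 1) J
    _ ≤ ∑ j ∈ Finset.range J, ∏ i, (brunelPoly d (Finset.range n) ^ (j + 1)).coeff (k i) := by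
        rw [Finset.sum_mul]
        refine Finset.sum_le_sum fun j hj => hprod hk hi₀ ?_
        have hj : (j : ℝ) ≤ p / E :=
          (Nat.le_floor_iff (by positivity)).1 (Nat.lt_succ_iff.1 (Finset.mem_range.1 hj))
        rwa [le_div_iff₀ (by positivity), mul_comm] at hj
    _ ≤ ∑ j ∈ Finset.range (⌊p⌋₊ + 1),
          ∏ i, (brunelPoly d (Finset.range n) ^ (j + 1)).coeff (k i) :=
        Finset.sum_le_sum_of_subset_of_nonneg (Finset.range_mono hJle) fun j _ _ => hterm _
    _ ≤ ∑ j ∈ Finset.range (⌊p⌋₊ + 2), ∏ i, (brunelPoly d (Finset.range n) ^ j).coeff (k i) := by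
        rw [Finset.sum_range_succ' _ (⌊p⌋₊ + 1)]
        exact le_add_of_nonneg_right (hterm 0)

theorem prod_brunelRoot_pow_le (d : ℕ) {n : ℕ} {k : Fin (d + 1) → ℕ} (hk : ∀ i, k i ≤ n)
    (i₀ : Fin (d + 1)) :
    brunelRoot d n * ∏ i, brunelRoot d (k i) ^ (d + 3)
      ≤ ((n : ℝ) + 1) ^ (d + 1) * brunelRoot d (k i₀) ^ (d + 2) := by
  set p := brunelRoot d (k i₀)
  set ρ := brunelRoot d n with hρ
  have hp : 0 < p := brunelRoot_pos d _
  have hρ0 : 0 < ρ := brunelRoot_pos d n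
  have hrest : ∏ i, brunelRoot d (k (i₀.succAbove i)) ^ (d + 3) ≤ ρ ^ ((d + 3) * d) :=
    calc ∏ i, brunelRoot d (k (i₀.succAbove i)) ^ (d + 3) ≤ ∏ _i : Fin d, ρ ^ (d + 3) :=
          Finset.prod_le_prod (fun i _ => (pow_pos (brunelRoot_pos d _) _).le) fun i _ =>
            pow_le_pow_left₀ (brunelRoot_pos d _).le (brunelRoot_monotone d (hk _)) _
      _ = ρ ^ ((d + 3) * d) := by rw [Finset.prod_const, Finset.card_fin, pow_mul]
  rw [Fin.prod_univ_succAbove _ i₀, ← brunelRoot_pow d n, ← hρ]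
  calc ρ * (p ^ (d + 3) * ∏ i, brunelRoot d (k (i₀.succAbove i)) ^ (d + 3))
      ≤ ρ * (p ^ (d + 3) * ρ ^ ((d + 3) * d)) := by gcongr
    _ = ρ ^ ((d + 3) * d + 1) * p ^ (d + 2) * p := by ring
    _ ≤ ρ ^ ((d + 3) * d + 1) * p ^ (d + 2) * ρ := by
        gcongr
        exact brunelRoot_monotone d (hk i₀)
    _ = (ρ ^ (d + 2)) ^ (d + 1) * p ^ (d + 2) := by ring

theorem exists_le_pow_mul_sum_prod_coeff_brunelPoly_pow (d : ℕ) :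
    ∃ c : ℝ, 0 < c ∧ ∀ N n : ℕ, n < N → ∃ m : ℕ, ∀ k : Fin (d + 1) → ℕ, (∀ i, k i ≤ n) →
      (m + 1) * c ≤ ((n : ℝ) + 1) ^ (d + 1) * ∑ j ∈ Finset.range (m + 1),
        ∏ i, (brunelPoly d (Finset.range N) ^ j).coeff (k i) := by
  obtain ⟨c, hc, hsum⟩ := exists_le_sum_prod_coeff_brunelPoly_pow d
  refine ⟨c / 3, by positivity, fun N n hn => ⟨⌊brunelRoot d n⌋₊ + 1, fun k hk => ?_⟩⟩
  obtain ⟨i₀, hi₀⟩ : ∃ i₀, ∀ i, k i₀ ≤ k i := Finite.exists_min k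
  have hsum := hsum (fun i => (hk i).trans_lt hn) hi₀
  have hprod := prod_brunelRoot_pow_le d hk i₀
  have hp_le := brunelRoot_monotone d (hk i₀)
  have hρ1 := one_le_brunelRoot d n
  have hQ : 0 < ∏ i, brunelRoot d (k i) ^ (d + 3) :=
    Finset.prod_pos fun i _ => pow_pos (brunelRoot_pos d _) _
  set p := brunelRoot d (k i₀)
  set ρ := brunelRoot d n
  set Q := ∏ i, brunelRoot d (k i) ^ (d + 3)
  calc ((⌊ρ⌋₊ + 1 : ℕ) + 1) * (c / 3) ≤ 3 * ρ * (c / 3) := by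
        gcongr
        push_cast
        linarith [Nat.floor_le (a := ρ) (by linarith)]
    _ = c * (ρ * Q) / Q := by field_simp
    _ ≤ c * (((n : ℝ) + 1) ^ (d + 1) * p ^ (d + 2)) / Q := by gcongr
    _ = ((n : ℝ) + 1) ^ (d + 1) * (c * p ^ (d + 2) / Q) := by ring
    _ ≤ ((n : ℝ) + 1) ^ (d + 1) * ∑ j ∈ Finset.range (⌊ρ⌋₊ + 1 + 1),
          ∏ i, (brunelPoly d (Finset.range N) ^ j).coeff (k i) := by
        gcongr
        refine hsum.trans (Finset.sum_le_sum_of_subset_of_nonneg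
          (Finset.range_mono (Nat.add_le_add_right (Nat.floor_le_floor hp_le) 2))
          fun j _ _ => Finset.prod_nonneg fun i _ => ?_)
        exact pow_mem (brunelPoly_mem_nonnegCoeffs d _) j _

/-- The polynomial `p(X_1) ⋯ p(X_d)` in `d` variables. -/
noncomputable def tensorPower (d : ℕ) (p : ℝ[X]) : MvPolynomial (Fin d) ℝ :=
  ∏ i, aeval (MvPolynomial.X i) p

theorem tensorPower_pow (d : ℕ) (p : ℝ[X]) (j : ℕ) :
    tensorPower d p ^ j = tensorPower d (p ^ j) := by
  simp only [tensorPower, Finset.prod_pow, map_pow]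

theorem tensorPower_eq_sum (d : ℕ) {p : ℝ[X]} {n : ℕ} (hn : p.natDegree < n) :
    tensorPower d p = ∑ k ∈ Fintype.piFinset fun _ : Fin d => Finset.range n,
      MvPolynomial.monomial (Finsupp.equivFunOnFinite.symm k) (∏ i, p.coeff (k i)) := by
  simp only [tensorPower, aeval_eq_sum_range' hn, Finset.prod_univ_sum]
  refine Finset.sum_congr rfl fun k _ => ?_
  rw [MvPolynomial.monomial_eq, Finsupp.prod_fintype _ _ fun _ => pow_zero _, map_prod,
    ← Finset.prod_mul_distrib]
  simp [MvPolynomial.smul_eq_C_mul]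

theorem coeff_tensorPower (d : ℕ) (p : ℝ[X]) (k : Fin d →₀ ℕ) :
    (tensorPower d p).coeff k = ∏ i, p.coeff (k i) := by
  classical
  set n := p.natDegree + 1 + ∑ i, k i
  have hkn : ∀ i, k i < n := fun i => by
    have := Finset.single_le_sum (f := k) (fun _ _ => Nat.zero_le _) (Finset.mem_univ i)
    omega
  rw [tensorPower_eq_sum d (n := n) (by omega), MvPolynomial.coeff_sum,
    Finset.sum_eq_single (k : Fin d → ℕ)]
  · simp
  · intro l _ hl
    rw [MvPolynomial.coeff_monomial, if_neg]
    rintro rfl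
    exact hl rfl
  · exact fun h => absurd (Fintype.mem_piFinset.2 fun i => Finset.mem_range.2 (hkn i)) h

theorem eval_one_tensorPower (d : ℕ) (p : ℝ[X]) :
    MvPolynomial.eval 1 (tensorPower d p) = p.eval 1 ^ d := by
  have heval : ∀ i : Fin d,
      MvPolynomial.eval 1 (aeval (MvPolynomial.X i : MvPolynomial (Fin d) ℝ) p) = p.eval 1 := by
    intro i
    rw [aeval_def, hom_eval₂, MvPolynomial.eval_X, Pi.one_apply, ← eval₂_id]
    congr 1
    ext r
    simp
  simp [tensorPower, heval]

/-- The polynomial `(1 + X + ⋯ + X^n) / (n + 1)`. -/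
noncomputable def uniformPoly (n : ℕ) : ℝ[X] :=
  C ((n : ℝ) + 1)⁻¹ * ∑ k ∈ Finset.range (n + 1), X ^ k

theorem coeff_uniformPoly (n k : ℕ) :
    (uniformPoly n).coeff k = if k ≤ n then ((n : ℝ) + 1)⁻¹ else 0 := by
  rw [uniformPoly, coeff_C_mul, finsetSum_coeff]
  simp [coeff_X_pow]

/-- The average of the monomials `X^k`, `k ∈ {0, …, n}^d`. The cubes have side `n + 1`, so that
every `n : ℕ` gives a nonempty one. -/
noncomputable def cubeAverage (d n : ℕ) : MvPolynomial (Fin d) ℝ := tensorPower d (uniformPoly n)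

theorem exists_coeff_cubeAverage_le (d : ℕ) :
    ∃ C : ℝ, 0 < C ∧ ∀ N : ℕ, ∃ u : MvPolynomial (Fin d) ℝ,
      (∀ k, 0 ≤ u.coeff k) ∧ MvPolynomial.eval 1 u ≤ 1 ∧ ∀ n < N, ∃ m : ℕ, ∀ k,
        (cubeAverage d n).coeff k
          ≤ ((C / (m + 1)) • ∑ j ∈ Finset.range (m + 1), u ^ j).coeff k := by
  obtain _ | d := d
  · refine ⟨1, one_pos, fun N => ⟨1, fun k => ?_, by simp, fun n _ => ⟨0, fun k => ?_⟩⟩⟩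
    · simp [Subsingleton.elim k 0]
    · simp [cubeAverage, tensorPower]
  obtain ⟨c, hc, hbound⟩ := exists_le_pow_mul_sum_prod_coeff_brunelPoly_pow d
  refine ⟨1 / c, by positivity, fun N => ?_⟩
  set q := brunelPoly d (Finset.range N)
  have hq : q ∈ nonnegCoeffs := brunelPoly_mem_nonnegCoeffs d _
  refine ⟨tensorPower (d + 1) q, fun k => ?_, ?_, fun n hn => ?_⟩
  · rw [coeff_tensorPower]
    exact Finset.prod_nonneg fun i _ => hq _
  · rw [eval_one_tensorPower, eval_one_brunelPoly_range]
    have hinv := inv_le_one_of_one_le₀ (one_le_brunelRoot d N)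
    have hpos := inv_pos.2 (brunelRoot_pos d N)
    exact pow_le_one₀ (by linarith) (by linarith)
  obtain ⟨m, hm⟩ := hbound N n hn
  refine ⟨m, fun k => ?_⟩
  simp only [cubeAverage, tensorPower_pow, MvPolynomial.coeff_smul, MvPolynomial.coeff_sum,
    coeff_tensorPower, coeff_uniformPoly, smul_eq_mul]
  by_cases hk : ∀ i, k i ≤ n
  · simp only [hk, if_true, Finset.prod_const, Finset.card_univ, Fintype.card_fin]
    rw [inv_pow, inv_le_iff_one_le_mul₀ (by positivity)]
    have := hm k hk
    rw [div_div, div_mul_eq_mul_div, one_mul, div_mul_eq_mul_div, le_div_iff₀ (by positivity)]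
    linarith
  · push Not at hk
    obtain ⟨i, hi⟩ := hk
    rw [Finset.prod_eq_zero (Finset.mem_univ i) (if_neg hi.not_ge)]
    exact mul_nonneg (by positivity) (Finset.sum_nonneg fun j _ =>
      Finset.prod_nonneg fun i _ => pow_mem hq j _)

end BrunelDomination

section WeakTypeCubeAverage

open MvPolynomial

variable {μ : Measure Ω} {σ : Type*} {φ : MvPolynomial σ ℝ →ₐ[ℝ] Lp ℝ 1 μ →L[ℝ] Lp ℝ 1 μ}
  {d : ℕ} {ψ : MvPolynomial (Fin d) ℝ →ₐ[ℝ] Lp ℝ 1 μ →L[ℝ] Lp ℝ 1 μ}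

theorem isDunfordSchwartz_map_monomial (hφ : ∀ i, IsDunfordSchwartz μ (φ (X i))) (k : σ →₀ ℕ) :
    IsDunfordSchwartz μ (φ (monomial k 1)) := by
  induction k using Finsupp.induction_linear with
  | zero => simpa using IsDunfordSchwartz.one
  | add k l hk hl =>
    rw [← mul_one (1 : ℝ), ← monomial_mul, map_mul]
    exact hk.mul hl
  | single i n =>
    rw [← X_pow_eq_monomial, map_pow]
    exact (hφ i).pow n

theorem map_mvPolynomial_eq_sum (φ : MvPolynomial σ ℝ →ₐ[ℝ] Lp ℝ 1 μ →L[ℝ] Lp ℝ 1 μ)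
    (P : MvPolynomial σ ℝ) : φ P = ∑ k ∈ P.support, P.coeff k • φ (monomial k 1) := by
  conv_lhs => rw [P.as_sum, map_sum]
  refine Finset.sum_congr rfl fun k _ => ?_
  rw [← map_smul, smul_monomial, smul_eq_mul, mul_one]

theorem isDunfordSchwartz_map_of_coeff_nonneg (hφ : ∀ i, IsDunfordSchwartz μ (φ (X i)))
    {P : MvPolynomial σ ℝ} (hP : ∀ k, 0 ≤ P.coeff k) (hP1 : eval 1 P ≤ 1) :
    IsDunfordSchwartz μ (φ P) := by
  rw [map_mvPolynomial_eq_sum]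
  refine IsDunfordSchwartz.sum_smul (fun k _ => hP k) ?_
    fun k _ => isDunfordSchwartz_map_monomial hφ k
  simpa [eval_eq] using hP1

theorem map_le_map_of_coeff_le (hφ : ∀ i, IsDunfordSchwartz μ (φ (X i))) {P Q : MvPolynomial σ ℝ}
    (hPQ : ∀ k, P.coeff k ≤ Q.coeff k) {f : Lp ℝ 1 μ} (hf : 0 ≤ f) : φ P f ≤ φ Q f := by
  rw [← sub_nonneg, ← sub_apply, ← map_sub, map_mvPolynomial_eq_sum, _root_.sum_apply]
  refine Finset.sum_nonneg fun k _ => ?_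
  rw [_root_.smul_apply]
  refine smul_nonneg ?_ ?_
  · simpa using hPQ k
  · exact (isDunfordSchwartz_map_monomial hφ k).nonneg f hf

theorem isDunfordSchwartz_map_aeval_uniformPoly (hφ : ∀ i, IsDunfordSchwartz μ (φ (X i))) (i : σ)
    (n : ℕ) : IsDunfordSchwartz μ (φ (Polynomial.aeval (X i) (uniformPoly n))) := by
  have hsum : φ (Polynomial.aeval (X i) (uniformPoly n))
      = ∑ k ∈ Finset.range (n + 1), ((n : ℝ) + 1)⁻¹ • φ (X i) ^ k := by
    simp only [uniformPoly, map_mul, map_sum, map_pow, map_smul, Polynomial.aeval_C,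
      Polynomial.aeval_X, ← Algebra.smul_def, Finset.smul_sum]
  rw [hsum]
  refine IsDunfordSchwartz.sum_smul (fun _ _ => by positivity) (le_of_eq ?_) fun k _ => (hφ i).pow k
  simp [mul_inv_cancel₀ (n.cast_add_one_ne_zero (R := ℝ))]

theorem isDunfordSchwartz_map_prod {ι : Type*} (s : Finset ι) {P : ι → MvPolynomial σ ℝ}
    (hP : ∀ i, IsDunfordSchwartz μ (φ (P i))) : IsDunfordSchwartz μ (φ (∏ i ∈ s, P i)) :=
  Finset.prod_induction P (fun Q => IsDunfordSchwartz μ (φ Q))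
    (fun P Q hP hQ => (map_mul φ P Q).symm ▸ hP.mul hQ)
    ((map_one φ).symm ▸ IsDunfordSchwartz.one) fun i _ => hP i

theorem isDunfordSchwartz_map_cubeAverage (hψ : ∀ i, IsDunfordSchwartz μ (ψ (X i))) (n : ℕ) :
    IsDunfordSchwartz μ (ψ (cubeAverage d n)) := by
  rw [cubeAverage, tensorPower]
  exact isDunfordSchwartz_map_prod _ fun i => isDunfordSchwartz_map_aeval_uniformPoly hψ i n

theorem exists_map_cubeAverage_le_ergodicSum (hψ : ∀ i, IsDunfordSchwartz μ (ψ (X i))) :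
    ∃ C : ℝ, 0 < C ∧ ∀ N : ℕ, ∃ U, IsDunfordSchwartz μ U ∧ ∀ n < N, ∃ m : ℕ, ∀ f, 0 ≤ f →
      ψ (cubeAverage d n) f ≤ (C / (m + 1)) • ∑ j ∈ Finset.range (m + 1), (U ^ j) f := by
  obtain ⟨C, hC, hdom⟩ := exists_coeff_cubeAverage_le d
  refine ⟨C, hC, fun N => ?_⟩
  obtain ⟨u, hu0, hu1, hu⟩ := hdom N
  refine ⟨ψ u, isDunfordSchwartz_map_of_coeff_nonneg hψ hu0 hu1, fun n hn => ?_⟩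
  obtain ⟨m, hm⟩ := hu n hn
  refine ⟨m, fun f hf => (map_le_map_of_coeff_le hψ hm hf).trans_eq ?_⟩
  simp only [map_smul, map_sum, map_pow, _root_.smul_apply, _root_.sum_apply]

/-- The weak type `(1,1)` maximal inequality with constant `C` for a sequence of operators. -/
def HasWeakType (μ : Measure Ω) (A : ℕ → Lp ℝ 1 μ →L[ℝ] Lp ℝ 1 μ) (C : ℝ) : Prop :=
  ∀ f, 0 ≤ f → ∀ lam : ℝ, 0 < lam →
    μ {ω | ∃ n, lam < A n f ω} ≤ ENNReal.ofReal (C * ‖f‖ / lam)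

theorem exists_hasWeakType_cubeAverage (hψ : ∀ i, IsDunfordSchwartz μ (ψ (X i))) :
    ∃ C : ℝ, 0 < C ∧ HasWeakType μ (fun n => ψ (cubeAverage d n)) C := by
  obtain ⟨C, hC, hdom⟩ := exists_map_cubeAverage_le_ergodicSum hψ
  refine ⟨C, hC, fun f hf lam hlam => measure_exists_le_of_forall_bounded fun N => ?_⟩
  obtain ⟨U, hU, hUn⟩ := hdom (N + 1)
  have hpt : ∀ᵐ ω ∂μ, ∀ n < N + 1, ∃ m : ℕ, ψ (cubeAverage d n) f ω
      ≤ C / (m + 1) * (∑ j ∈ Finset.range (m + 1), (U ^ j) f : Lp ℝ 1 μ) ω := by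
    refine ae_all_iff.2 fun n => ?_
    by_cases hn : n < N + 1
    · obtain ⟨m, hm⟩ := hUn n hn
      filter_upwards [(Lp.coeFn_le _ _).2 (hm f hf), Lp.coeFn_smul (C / ((m : ℝ) + 1))
        (∑ j ∈ Finset.range (m + 1), (U ^ j) f)] with ω hle hsmul _
      exact ⟨m, by rwa [hsmul] at hle⟩
    · exact .of_forall fun _ h => absurd h hn
  calc μ {ω | ∃ n ≤ N, lam < ψ (cubeAverage d n) f ω}
      ≤ μ {ω | ∃ m : ℕ, m * (lam / C) < (∑ j ∈ Finset.range m, (U ^ j) f : Lp ℝ 1 μ) ω} := by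
        refine measure_mono_ae ?_
        filter_upwards [hpt] with ω hω
        rintro ⟨n, hn, hlt⟩
        obtain ⟨m, hm⟩ := hω n (Nat.lt_succ_of_le hn)
        refine ⟨m + 1, ?_⟩
        have hlt := hlt.trans_le hm
        rw [div_mul_eq_mul_div, lt_div_iff₀ (by positivity)] at hlt
        rw [← mul_div_assoc, div_lt_iff₀ hC]
        rw [Nat.cast_succ]
        linarith
    _ ≤ ENNReal.ofReal (‖f‖ / (lam / C)) := hopf_maximal_inequality hU hf (by positivity)
    _ = ENNReal.ofReal (C * ‖f‖ / lam) := by rw [div_div_eq_mul_div, mul_comm]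

end WeakTypeCubeAverage

section SquareIntegral

variable {μ : Measure Ω} {U : Lp ℝ 1 μ →L[ℝ] Lp ℝ 1 μ} {g h : Lp ℝ 1 μ} {B B' : ℝ}

/-- The essential bound `|g| ≤ B` for `g ∈ L¹(μ)`. -/
def AEBounded (B : ℝ) (g : Lp ℝ 1 μ) : Prop := ∀ᵐ ω ∂μ, |g ω| ≤ B

namespace AEBounded

theorem mono (hBB' : B ≤ B') (hg : AEBounded B g) : AEBounded B' g :=
  Eventually.mono hg fun _ h => h.trans hBB'

theorem add (hg : AEBounded B g) (hh : AEBounded B' h) : AEBounded (B + B') (g + h) := by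
  filter_upwards [hg, hh, Lp.coeFn_add g h] with ω hg hh hadd
  rw [hadd]
  exact (abs_add_le _ _).trans (add_le_add hg hh)

theorem smul (c : ℝ) (hg : AEBounded B g) : AEBounded (|c| * B) (c • g) := by
  filter_upwards [hg, Lp.coeFn_smul c g] with ω hg hsmul
  rw [hsmul, Pi.smul_apply, smul_eq_mul, abs_mul]
  exact mul_le_mul_of_nonneg_left hg (abs_nonneg c)

theorem sub (hg : AEBounded B g) (hh : AEBounded B' h) : AEBounded (B + B') (g - h) := by
  simpa [sub_eq_add_neg] using hg.add (hh.smul (-1))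

theorem integrable_sq (hg : AEBounded B g) : Integrable (fun ω => g ω ^ 2) μ := by
  refine ((L1.integrable_coeFn g).norm.const_mul B).mono'
    ((Lp.stronglyMeasurable g).pow 2).aestronglyMeasurable ?_
  filter_upwards [hg] with ω h
  rw [Real.norm_of_nonneg (sq_nonneg _), Real.norm_eq_abs, ← sq_abs, sq]
  exact mul_le_mul_of_nonneg_right h (abs_nonneg _)

end AEBounded

theorem exists_aeBounded_norm_sub_lt (f : Lp ℝ 1 μ) {η : ℝ} (hη : 0 < η) :
    ∃ B : ℝ, 0 ≤ B ∧ ∃ g : Lp ℝ 1 μ, AEBounded B g ∧ ‖f - g‖ < η := by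
  obtain ⟨g, hg, hgm⟩ := (Lp.memLp f).exists_simpleFunc_eLpNorm_sub_lt one_ne_top
    (ENNReal.ofReal_pos.2 hη).ne'
  obtain ⟨B, hB⟩ := g.exists_forall_norm_le
  refine ⟨max B 0, le_max_right _ _, hgm.toLp g, ?_, ?_⟩
  · filter_upwards [hgm.coeFn_toLp] with ω h
    rw [h]
    exact (hB ω).trans (le_max_left _ _)
  · have hsub : f - hgm.toLp g = ((Lp.memLp f).sub hgm).toLp _ := by
      rw [MemLp.toLp_sub (Lp.memLp f) hgm, Lp.toLp_coeFn]
    rw [hsub, Lp.norm_toLp]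
    exact ENNReal.toReal_lt_of_lt_ofReal hg

theorem IsDunfordSchwartz.coeFn_abs_le (hU : IsDunfordSchwartz μ U) (f : Lp ℝ 1 μ) :
    ∀ᵐ ω ∂μ, |U f ω| ≤ U |f| ω := by
  filter_upwards [(Lp.coeFn_le _ _).2 (hU.abs_le f), Lp.coeFn_abs (U f)] with ω hle habs
  rwa [← habs]

theorem IsDunfordSchwartz.aeBounded (hU : IsDunfordSchwartz μ U) (hB : 0 ≤ B)
    (hg : AEBounded B g) : AEBounded B (U g) := by
  have habs : ∀ᵐ ω ∂μ, |g| ω ≤ B := by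
    filter_upwards [hg, Lp.coeFn_abs g] with ω h habs
    rwa [habs]
  filter_upwards [hU.le_const B hB |g| habs, hU.coeFn_abs_le g] with ω h₁ h₂ using h₂.trans h₁

theorem IsDunfordSchwartz.coeFn_sq_le (hU : IsDunfordSchwartz μ U)
    (hh : h =ᵐ[μ] fun ω => g ω ^ 2) : ∀ᵐ ω ∂μ, U g ω ^ 2 ≤ U h ω := by
  have hrat : ∀ᵐ ω ∂μ, ∀ c : ℚ, 2 * (c : ℝ) * U g ω - U h ω ≤ (c : ℝ) ^ 2 := by
    rw [ae_all_iff]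
    intro c
    have hle : ∀ᵐ ω ∂μ, ((2 * (c : ℝ)) • g - h : Lp ℝ 1 μ) ω ≤ (c : ℝ) ^ 2 := by
      filter_upwards [hh, Lp.coeFn_sub ((2 * (c : ℝ)) • g) h, Lp.coeFn_smul (2 * (c : ℝ)) g]
        with ω hh hsub hsmul
      rw [hsub, Pi.sub_apply, hsmul, hh, Pi.smul_apply, smul_eq_mul]
      nlinarith [sq_nonneg (g ω - c)]
    have hUle := hU.le_const _ (sq_nonneg _) _ hle
    rw [map_sub, map_smul] at hUle
    filter_upwards [hUle, Lp.coeFn_sub ((2 * (c : ℝ)) • U g) (U h),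
      Lp.coeFn_smul (2 * (c : ℝ)) (U g)] with ω hUle hsub hsmul
    rwa [hsub, Pi.sub_apply, hsmul, Pi.smul_apply, smul_eq_mul] at hUle
  filter_upwards [hrat] with ω hω
  have hreal : ∀ c : ℝ, 2 * c * U g ω - U h ω ≤ c ^ 2 := fun c =>
    Rat.denseRange_cast.induction_on c (isClosed_le (by fun_prop) (by fun_prop)) hω
  linarith [hreal (U g ω)]

/-- The squared `L²`-norm of an element of `L¹(μ)`, with the junk value `0` when it is infinite. -/
noncomputable def sqIntegral (g : Lp ℝ 1 μ) : ℝ := ∫ ω, g ω ^ 2 ∂μ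

theorem sqIntegral_nonneg (g : Lp ℝ 1 μ) : 0 ≤ sqIntegral g := integral_nonneg fun _ => sq_nonneg _

theorem IsDunfordSchwartz.sqIntegral_le (hU : IsDunfordSchwartz μ U) (hB : 0 ≤ B)
    (hg : AEBounded B g) : sqIntegral (U g) ≤ sqIntegral g := by
  set s : Lp ℝ 1 μ := hg.integrable_sq.toL1 _
  have hs : s =ᵐ[μ] fun ω => g ω ^ 2 := hg.integrable_sq.coeFn_toL1
  have hs0 : 0 ≤ s := by
    rw [← Lp.coeFn_nonneg]
    filter_upwards [hs] with ω h
    exact h ▸ sq_nonneg _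
  calc sqIntegral (U g) ≤ ∫ ω, U s ω ∂μ :=
        integral_mono_ae (hU.aeBounded hB hg).integrable_sq (L1.integrable_coeFn _)
          (hU.coeFn_sq_le hs)
    _ = ‖U s‖ := (L1_norm_eq_integral_of_nonneg (hU.nonneg s hs0)).symm
    _ ≤ ‖s‖ := hU.norm_le s
    _ = ∫ ω, s ω ∂μ := L1_norm_eq_integral_of_nonneg hs0
    _ = sqIntegral g := integral_congr_ae hs

theorem measure_lt_abs_le_sqIntegral_div (hg : AEBounded B g) {lam : ℝ} (hlam : 0 < lam) :
    μ {ω | lam < |g ω|} ≤ ENNReal.ofReal (sqIntegral g / lam ^ 2) := by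
  refine (measure_mono fun ω (hω : lam < |g ω|) => ?_).trans
    (measure_ge_le_ofReal_integral_div hg.integrable_sq (.of_forall fun _ => sq_nonneg _)
      (by positivity))
  rw [mem_ofPred_eq, ← sq_abs (g ω)]
  exact pow_le_pow_left₀ hlam.le hω.le 2

theorem sqIntegral_sub_eq (hg : AEBounded B g) (hh : AEBounded B' h) :
    sqIntegral (g - h)
      = 2 * sqIntegral g + 2 * sqIntegral h - 4 * sqIntegral ((2 : ℝ)⁻¹ • (g + h)) := by
  have hg2 := hg.integrable_sq.const_mul 2
  have hh2 := hh.integrable_sq.const_mul 2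
  have hsum : Integrable (fun ω => 2 * g ω ^ 2 + 2 * h ω ^ 2) μ := hg2.add hh2
  have hgh := ((hg.add hh).smul 2⁻¹).integrable_sq.const_mul 4
  simp only [sqIntegral, ← integral_const_mul]
  rw [← integral_add hg2 hh2, ← integral_sub hsum hgh]
  refine integral_congr_ae ?_
  filter_upwards [Lp.coeFn_sub g h, Lp.coeFn_add g h, Lp.coeFn_smul (2 : ℝ)⁻¹ (g + h)]
    with ω hsub hadd hsmul
  simp only [hsub, hsmul, hadd, Pi.sub_apply, Pi.smul_apply, Pi.add_apply, smul_eq_mul]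
  ring

end SquareIntegral

section MaximalToConvergence

variable {μ : Measure Ω} {A : ℕ → Lp ℝ 1 μ →L[ℝ] Lp ℝ 1 μ} {C B lam : ℝ}

theorem ae_forall_coeFn_map_sub (A : ℕ → Lp ℝ 1 μ →L[ℝ] Lp ℝ 1 μ) (f g : Lp ℝ 1 μ) :
    ∀ᵐ ω ∂μ, ∀ n, A n (f - g) ω = A n f ω - A n g ω :=
  ae_all_iff.2 fun n => by
    rw [map_sub]
    exact Lp.coeFn_sub _ _

theorem norm_excess_le_sqIntegral_div {g : Lp ℝ 1 μ} (hg : AEBounded B g) (hlam : 0 < lam) :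
    ‖excess hlam.le |g|‖ ≤ sqIntegral g / lam := by
  rw [L1_norm_eq_integral_of_nonneg (excess_nonneg _ _), sqIntegral, ← integral_div]
  refine integral_mono_ae (L1.integrable_coeFn _) (hg.integrable_sq.div_const _) ?_
  filter_upwards [coeFn_excess hlam.le |g|, Lp.coeFn_abs g] with ω hexc habs
  rw [hexc, habs, le_div_iff₀ hlam, ← sq_abs]
  rcases le_total (|g ω| - lam) 0 with h | h
  · rw [max_eq_right h, zero_mul]
    positivity
  · rw [max_eq_left h]
    nlinarith [sq_nonneg (|g ω| - lam)]

namespace HasWeakType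

theorem measure_exists_lt_abs_le (hA : ∀ n, IsDunfordSchwartz μ (A n)) (hC : HasWeakType μ A C)
    (f : Lp ℝ 1 μ) (hlam : 0 < lam) :
    μ {ω | ∃ n, lam < |A n f ω|} ≤ ENNReal.ofReal (C * ‖f‖ / lam) := by
  rw [← norm_abs_eq_norm f]
  refine (measure_mono_ae ?_).trans (hC |f| (abs_nonneg f) lam hlam)
  filter_upwards [ae_all_iff.2 fun n => (hA n).coeFn_abs_le f] with ω hω
  exact fun ⟨n, hn⟩ => ⟨n, hn.trans_le (hω n)⟩

theorem measure_exists_two_mul_lt_abs_le (hA : ∀ n, IsDunfordSchwartz μ (A n)) (hC0 : 0 ≤ C)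
    (hC : HasWeakType μ A C) {g : Lp ℝ 1 μ} (hg : AEBounded B g) (hlam : 0 < lam) :
    μ {ω | ∃ n, 2 * lam < |A n g ω|} ≤ ENNReal.ofReal (C * sqIntegral g / lam ^ 2) := by
  set h := excess hlam.le |g|
  have hle : ∀ᵐ ω ∂μ, (|g| - h : Lp ℝ 1 μ) ω ≤ lam := by
    filter_upwards [coeFn_excess hlam.le |g|, Lp.coeFn_sub |g| h] with ω hexc hsub
    rw [hsub, Pi.sub_apply, hexc]
    linarith [le_max_left ((|g| : Lp ℝ 1 μ) ω - lam) 0]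
  calc μ {ω | ∃ n, 2 * lam < |A n g ω|} ≤ μ {ω | ∃ n, lam < A n h ω} := by
        refine measure_mono_ae ?_
        filter_upwards [ae_all_iff.2 fun n => (hA n).coeFn_abs_le g,
          ae_all_iff.2 fun n => (hA n).le_const lam hlam.le _ hle, ae_forall_coeFn_map_sub A |g| h]
          with ω habs hle hsub
        rintro ⟨n, hn⟩
        have := hle n
        rw [hsub] at this
        exact ⟨n, by linarith [habs n]⟩
    _ ≤ ENNReal.ofReal (C * ‖h‖ / lam) := hC h (excess_nonneg _ _) lam hlam
    _ ≤ ENNReal.ofReal (C * sqIntegral g / lam ^ 2) := by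
        rw [sq, ← div_div, mul_div_assoc C (sqIntegral g)]
        gcongr
        exact norm_excess_le_sqIntegral_div hg hlam

end HasWeakType

section NearMinimizer

variable {K : Set (Lp ℝ 1 μ)} {h h' : Lp ℝ 1 μ} {η : ℝ}

theorem sInf_sqIntegral_le (hh : h ∈ K) : sInf (sqIntegral '' K) ≤ sqIntegral h :=
  csInf_le ⟨0, by rintro _ ⟨h, _, rfl⟩; exact sqIntegral_nonneg h⟩ (mem_image_of_mem _ hh)

theorem exists_sqIntegral_lt_sInf_add (hK : K.Nonempty) (hη : 0 < η) :
    ∃ h ∈ K, sqIntegral h < sInf (sqIntegral '' K) + η := by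
  obtain ⟨_, ⟨h, hh, rfl⟩, hlt⟩ :=
    exists_lt_of_csInf_lt (hK.image sqIntegral) (lt_add_of_pos_right _ hη)
  exact ⟨h, hh, hlt⟩

theorem sqIntegral_sub_le_of_near_sInf (hKB : ∀ h ∈ K, AEBounded B h)
    (hKmid : ∀ h ∈ K, ∀ h' ∈ K, (2 : ℝ)⁻¹ • (h + h') ∈ K) (hh : h ∈ K) (hh' : h' ∈ K)
    (hη : sqIntegral h ≤ sInf (sqIntegral '' K) + η)
    (hη' : sqIntegral h' ≤ sInf (sqIntegral '' K) + η) : sqIntegral (h - h') ≤ 4 * η := by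
  rw [sqIntegral_sub_eq (hKB h hh) (hKB h' hh')]
  linarith [sInf_sqIntegral_le (hKmid h hh h' hh')]

theorem measure_exists_le_lt_abs_map_sub_self_le (hA : ∀ n, IsDunfordSchwartz μ (A n))
    (hB : 0 ≤ B) (hKB : ∀ h ∈ K, AEBounded B h)
    (hKmid : ∀ h ∈ K, ∀ h' ∈ K, (2 : ℝ)⁻¹ • (h + h') ∈ K) (hKA : ∀ h ∈ K, ∀ n, A n h ∈ K)
    (hh : h ∈ K) (hη : sqIntegral h ≤ sInf (sqIntegral '' K) + η) (hlam : 0 < lam) (M : ℕ) :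
    μ {ω | ∃ n ≤ M, lam < |(A n h - h : Lp ℝ 1 μ) ω|}
      ≤ ENNReal.ofReal ((M + 1) * (4 * η / lam ^ 2)) := by
  have hAη : ∀ n, sqIntegral (A n h) ≤ sInf (sqIntegral '' K) + η := fun n =>
    ((hA n).sqIntegral_le hB (hKB h hh)).trans hη
  calc μ {ω | ∃ n ≤ M, lam < |(A n h - h : Lp ℝ 1 μ) ω|}
      = μ (⋃ n ∈ Finset.range (M + 1), {ω | lam < |(A n h - h : Lp ℝ 1 μ) ω|}) := by
        congr 1
        ext ω
        simp
    _ ≤ ∑ n ∈ Finset.range (M + 1), μ {ω | lam < |(A n h - h : Lp ℝ 1 μ) ω|} :=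
        measure_biUnion_finset_le _ _
    _ ≤ ∑ n ∈ Finset.range (M + 1), ENNReal.ofReal (4 * η / lam ^ 2) := by
        refine Finset.sum_le_sum fun n _ => (measure_lt_abs_le_sqIntegral_div
          (((hA n).aeBounded hB (hKB h hh)).sub (hKB h hh)) hlam).trans ?_
        gcongr
        exact sqIntegral_sub_le_of_near_sInf hKB hKmid (hKA h hh n) hh (hAη n) hη
    _ = ENNReal.ofReal ((M + 1) * (4 * η / lam ^ 2)) := by
        rw [Finset.sum_const, Finset.card_range, nsmul_eq_mul, ENNReal.ofReal_mul (by positivity)]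
        norm_cast

theorem measure_exists_le_lt_abs_map_sub_self_le_add (A : ℕ → Lp ℝ 1 μ →L[ℝ] Lp ℝ 1 μ)
    (h h' : Lp ℝ 1 μ) (lam : ℝ) (M : ℕ) :
    μ {ω | ∃ n ≤ M, 4 * lam < |(A n h - h : Lp ℝ 1 μ) ω|} ≤
      μ {ω | ∃ n, 2 * lam < |A n (h - h') ω|} + μ {ω | lam < |(h - h' : Lp ℝ 1 μ) ω|} +
        μ {ω | ∃ n ≤ M, lam < |(A n h' - h' : Lp ℝ 1 μ) ω|} := by
  refine le_trans (measure_mono_ae ?_)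
    ((measure_union_le _ _).trans (add_le_add_left (measure_union_le _ _) _))
  filter_upwards [ae_forall_coeFn_map_sub A h h', Lp.coeFn_sub h h',
    ae_all_iff.2 fun n => Lp.coeFn_sub (A n h) h,
    ae_all_iff.2 fun n => Lp.coeFn_sub (A n h') h'] with ω hAsub hsub hAh hAh'
  rintro ⟨n, hnM, hlt⟩
  by_contra hcon
  obtain ⟨hcon, hM⟩ : ω ∉ _ ∧ ω ∉ _ := not_or.1 hcon
  obtain ⟨hweak, hdist⟩ : ω ∉ _ ∧ ω ∉ _ := not_or.1 hcon
  simp only [mem_ofPred_eq, not_exists, not_and, not_lt] at hweak hdist hM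
  have h₁ := abs_le.1 (hAsub n ▸ hweak n)
  have h₂ := abs_le.1 (hsub ▸ hdist)
  have h₃ := abs_le.1 (hAh' n ▸ hM n hnM)
  rw [hAh n] at hlt
  simp only [Pi.sub_apply] at h₁ h₂ h₃ hlt
  exact hlt.not_ge (abs_le.2 ⟨by linarith, by linarith⟩)

theorem measure_exists_lt_abs_map_sub_self_le (hA : ∀ n, IsDunfordSchwartz μ (A n)) (hC0 : 0 ≤ C)
    (hC : HasWeakType μ A C) (hB : 0 ≤ B) (hKB : ∀ h ∈ K, AEBounded B h)
    (hKmid : ∀ h ∈ K, ∀ h' ∈ K, (2 : ℝ)⁻¹ • (h + h') ∈ K) (hKA : ∀ h ∈ K, ∀ n, A n h ∈ K)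
    (hh : h ∈ K) (hη : 0 < η) (hhη : sqIntegral h ≤ sInf (sqIntegral '' K) + η) (hlam : 0 < lam) :
    μ {ω | ∃ n, 4 * lam < |(A n h - h : Lp ℝ 1 μ) ω|}
      ≤ ENNReal.ofReal ((C + 2) * (4 * η / lam ^ 2)) := by
  refine measure_exists_le_of_forall_bounded fun M => ?_
  obtain ⟨h', hh', hη'⟩ := exists_sqIntegral_lt_sInf_add ⟨h, hh⟩
    (show 0 < η / (M + 1) by positivity)
  have hclose : sqIntegral (h - h') ≤ 4 * η :=
    sqIntegral_sub_le_of_near_sInf hKB hKmid hh hh' hhη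
      (hη'.le.trans (by gcongr; exact div_le_self hη.le (by linarith [M.cast_nonneg (α := ℝ)])))
  have hdist := (hKB h hh).sub (hKB h' hh')
  calc μ {ω | ∃ n ≤ M, 4 * lam < |(A n h - h : Lp ℝ 1 μ) ω|}
      ≤ μ {ω | ∃ n, 2 * lam < |A n (h - h') ω|} + μ {ω | lam < |(h - h' : Lp ℝ 1 μ) ω|} +
          μ {ω | ∃ n ≤ M, lam < |(A n h' - h' : Lp ℝ 1 μ) ω|} :=
        measure_exists_le_lt_abs_map_sub_self_le_add A h h' lam M
    _ ≤ ENNReal.ofReal (C * (4 * η) / lam ^ 2) + ENNReal.ofReal (4 * η / lam ^ 2) +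
          ENNReal.ofReal ((M + 1) * (4 * (η / (M + 1)) / lam ^ 2)) := by
        refine add_le_add (add_le_add ?_ ?_) ?_
        · refine (hC.measure_exists_two_mul_lt_abs_le hA hC0 hdist hlam).trans ?_
          gcongr
        · refine (measure_lt_abs_le_sqIntegral_div hdist hlam).trans ?_
          gcongr
        · exact measure_exists_le_lt_abs_map_sub_self_le hA hB hKB hKmid hKA hh' hη'.le hlam M
    _ = ENNReal.ofReal ((C + 2) * (4 * η / lam ^ 2)) := by
        rw [← ENNReal.ofReal_add (by positivity) (by positivity),
          ← ENNReal.ofReal_add (by positivity) (by positivity)]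
        congr 1
        field_simp
        ring

end NearMinimizer

/-- The maximal form of almost uniform convergence: up to a set of small measure, the tail of the
sequence stays close to some function. -/
def AuCauchy (μ : Measure Ω) (F : ℕ → Ω → ℝ) : Prop :=
  ∀ ε lam : ℝ, 0 < ε → 0 < lam → ∃ N, ∃ g : Ω → ℝ,
    μ {ω | ∃ n ≥ N, lam < |F n ω - g ω|} ≤ ENNReal.ofReal ε

/-- The averages `A_n` absorb `A_p` up to `O(1/n)`, uniformly on bounded sets. -/
def IsAsymptoticallyInvariant (A : ℕ → Lp ℝ 1 μ →L[ℝ] Lp ℝ 1 μ) : Prop :=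
  ∀ p, ∃ c : ℝ, ∀ n : ℕ, ∀ B : ℝ, 0 ≤ B → ∀ h : Lp ℝ 1 μ, AEBounded B h →
    AEBounded (c * B / (n + 1)) (A n (h - A p h))

/-- The functions bounded by `B` whose averages agree with those of `f` up to `O(1/n)`. -/
def asymptoticClass (A : ℕ → Lp ℝ 1 μ →L[ℝ] Lp ℝ 1 μ) (B : ℝ) (f : Lp ℝ 1 μ) :
    Set (Lp ℝ 1 μ) :=
  {h | AEBounded B h ∧ ∃ c : ℝ, ∀ n : ℕ, AEBounded (c / (n + 1)) (A n (f - h))}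

section AsymptoticClass

variable {f h h' : Lp ℝ 1 μ}

theorem self_mem_asymptoticClass (hf : AEBounded B f) : f ∈ asymptoticClass A B f := by
  refine ⟨hf, 0, fun n => ?_⟩
  rw [sub_self, map_zero]
  filter_upwards [Lp.coeFn_zero ℝ 1 μ] with ω h
  rw [h, Pi.zero_apply, abs_zero, zero_div]

theorem map_mem_asymptoticClass (hA : ∀ n, IsDunfordSchwartz μ (A n))
    (hinv : IsAsymptoticallyInvariant A) (hB : 0 ≤ B) (hh : h ∈ asymptoticClass A B f) (p : ℕ) :
    A p h ∈ asymptoticClass A B f := by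
  obtain ⟨hhB, c, hc⟩ := hh
  obtain ⟨c', hc'⟩ := hinv p
  refine ⟨(hA p).aeBounded hB hhB, c + c' * B, fun n => ?_⟩
  have hadd := (hc n).add (hc' n B hB h hhB)
  rwa [← map_add, sub_add_sub_cancel, ← add_div] at hadd

theorem midpoint_mem_asymptoticClass (hh : h ∈ asymptoticClass A B f)
    (hh' : h' ∈ asymptoticClass A B f) : (2 : ℝ)⁻¹ • (h + h') ∈ asymptoticClass A B f := by
  obtain ⟨hB, c, hc⟩ := hh
  obtain ⟨hB', c', hc'⟩ := hh'
  refine ⟨((hB.add hB').smul 2⁻¹).mono (le_of_eq ?_), (c + c') / 2, fun n => ?_⟩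
  · norm_num
    ring
  · have hmid := ((hc n).add (hc' n)).smul 2⁻¹
    rw [← map_add, ← map_smul] at hmid
    convert hmid using 2
    · norm_num
      ring
    · module

end AsymptoticClass

theorem auCauchy_of_aeBounded (hA : ∀ n, IsDunfordSchwartz μ (A n)) (hC0 : 0 ≤ C)
    (hC : HasWeakType μ A C) (hinv : IsAsymptoticallyInvariant A) (hB : 0 ≤ B) {f : Lp ℝ 1 μ}
    (hf : AEBounded B f) : AuCauchy μ fun n => A n f := by
  intro ε lam₀ hε hlam₀
  set lam := lam₀ / 5
  have hlam : 0 < lam := by positivity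
  set η := ε * lam ^ 2 / (4 * (C + 2)) with hη
  have hη0 : 0 < η := by positivity
  obtain ⟨h, hh, hhη⟩ :=
    exists_sqIntegral_lt_sInf_add ⟨f, self_mem_asymptoticClass (A := A) hf⟩ hη0
  have hmax := measure_exists_lt_abs_map_sub_self_le hA hC0 hC hB (fun _ h => h.1)
    (fun _ h _ h' => midpoint_mem_asymptoticClass h h')
    (fun _ h => map_mem_asymptoticClass hA hinv hB h) hh hη0 hhη.le hlam
  obtain ⟨-, c, hc⟩ := hh
  obtain ⟨N, hN⟩ := exists_nat_gt (c / lam)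
  refine ⟨N, h, (measure_mono_ae ?_).trans (hmax.trans_eq ?_)⟩
  · filter_upwards [ae_all_iff.2 hc, ae_forall_coeFn_map_sub A f h,
      ae_all_iff.2 fun n => Lp.coeFn_sub (A n h) h] with ω hω hsub hAh
    rintro ⟨n, hn, hlt⟩
    refine ⟨n, ?_⟩
    have hnN : (N : ℝ) ≤ n := by exact_mod_cast hn
    have hsmall : c / (n + 1) ≤ lam := by
      rw [div_lt_iff₀ hlam] at hN
      rw [div_le_iff₀ (by positivity)]
      nlinarith
    have hfh := (hω n).trans hsmall
    rw [hsub n] at hfh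
    rw [hAh n, Pi.sub_apply]
    linarith [abs_sub_le (A n f ω) (A n h ω) (h ω), show lam₀ = 5 * lam by ring]
  · rw [hη]
    congr 1
    field_simp

theorem auCauchy_of_hasWeakType (hA : ∀ n, IsDunfordSchwartz μ (A n)) (hC0 : 0 < C)
    (hC : HasWeakType μ A C) (hinv : IsAsymptoticallyInvariant A) (f : Lp ℝ 1 μ) :
    AuCauchy μ fun n => A n f := by
  intro ε lam hε hlam
  obtain ⟨B, hB, g, hg, hfg⟩ :=
    exists_aeBounded_norm_sub_lt f (η := ε / 2 * (lam / 2) / C) (by positivity)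
  obtain ⟨N, G, hG⟩ := auCauchy_of_aeBounded hA hC0.le hC hinv hB hg (ε / 2) (lam / 2)
    (by positivity) (by positivity)
  refine ⟨N, G, ?_⟩
  calc μ {ω | ∃ n ≥ N, lam < |A n f ω - G ω|}
      ≤ μ ({ω | ∃ n ≥ N, lam / 2 < |A n g ω - G ω|} ∪ {ω | ∃ n, lam / 2 < |A n (f - g) ω|}) := by
        refine measure_mono_ae ?_
        filter_upwards [ae_forall_coeFn_map_sub A f g] with ω hsub
        rintro ⟨n, hn, hlt⟩
        by_contra hcon
        obtain ⟨hG, hfg⟩ : ω ∉ _ ∧ ω ∉ _ := not_or.1 hcon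
        simp only [mem_ofPred_eq, not_exists, not_and, not_lt] at hG hfg
        have hfg := hsub n ▸ hfg n
        linarith [abs_sub_le (A n f ω) (A n g ω) (G ω), hG n hn]
    _ ≤ ENNReal.ofReal (ε / 2) + ENNReal.ofReal (ε / 2) := by
        refine (measure_union_le _ _).trans (add_le_add hG
          ((hC.measure_exists_lt_abs_le hA (f - g) (by positivity)).trans ?_))
        refine ENNReal.ofReal_le_ofReal ?_
        rw [lt_div_iff₀ hC0] at hfg
        rw [div_le_iff₀ (by positivity), mul_comm]
        exact hfg.le
    _ = ENNReal.ofReal ε := by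
        rw [← ENNReal.ofReal_add (by positivity) (by positivity), add_halves]

end MaximalToConvergence

section AsymptoticInvariance

open MvPolynomial

theorem sub_C_eval_mem_of_X_sub_C_mem {R σ : Type*} [CommRing R] {I : Ideal (MvPolynomial σ R)}
    {a : σ → R} (hI : ∀ i, X i - C (a i) ∈ I) (P : MvPolynomial σ R) : P - C (eval a P) ∈ I := by
  have hquot : Ideal.Quotient.mkₐ R I = (Algebra.ofId R _).comp (aeval a) :=
    algHom_ext fun i => by
      rw [AlgHom.comp_apply, aeval_X]
      exact Ideal.Quotient.eq.2 (hI i)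
  exact Ideal.Quotient.eq.1 (DFunLike.congr_fun hquot P)

theorem eval_one_uniformPoly (n : ℕ) : (uniformPoly n).eval 1 = 1 := by
  simp [uniformPoly, Polynomial.eval_finsetSum, inv_mul_cancel₀ (n.cast_add_one_ne_zero (R := ℝ))]

theorem cubeAverage_mul_X_sub_one (d n : ℕ) (i : Fin d) :
    cubeAverage d n * (X i - C 1) = C ((n : ℝ) + 1)⁻¹ * ((X i ^ (n + 1) - 1) *
      ∏ j ∈ Finset.univ.erase i, Polynomial.aeval (X j) (uniformPoly n)) := by
  have htelescope : Polynomial.aeval (X i : MvPolynomial (Fin d) ℝ) (uniformPoly n) * (X i - C 1)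
      = C ((n : ℝ) + 1)⁻¹ * (X i ^ (n + 1) - 1) := by
    rw [← geom_sum_mul, uniformPoly, map_mul, map_sum, Polynomial.aeval_C, C_1, mul_assoc]
    simp only [map_pow, Polynomial.aeval_X, algebraMap_eq]
  rw [cubeAverage, tensorPower, ← Finset.mul_prod_erase _ _ (Finset.mem_univ i), mul_right_comm,
    htelescope, mul_assoc]

variable {μ : Measure Ω} {σ : Type*} {φ : MvPolynomial σ ℝ →ₐ[ℝ] Lp ℝ 1 μ →L[ℝ] Lp ℝ 1 μ}
  {d : ℕ} {ψ : MvPolynomial (Fin d) ℝ →ₐ[ℝ] Lp ℝ 1 μ →L[ℝ] Lp ℝ 1 μ}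

theorem exists_aeBounded_map (hφ : ∀ i, IsDunfordSchwartz μ (φ (X i))) (P : MvPolynomial σ ℝ) :
    ∃ b : ℝ, 0 ≤ b ∧ ∀ B : ℝ, 0 ≤ B → ∀ h, AEBounded B h → AEBounded (b * B) (φ P h) := by
  induction P using MvPolynomial.induction_on with
  | C a =>
    refine ⟨|a|, abs_nonneg a, fun B _ h hh => ?_⟩
    rw [← algebraMap_eq, AlgHom.commutes, Algebra.algebraMap_eq_smul_one]
    exact hh.smul a
  | add P Q hP hQ =>
    obtain ⟨b, hb, hP⟩ := hP
    obtain ⟨c, hc, hQ⟩ := hQ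
    refine ⟨b + c, add_nonneg hb hc, fun B hB h hh => ?_⟩
    rw [map_add, add_mul]
    exact (hP B hB h hh).add (hQ B hB h hh)
  | mul_X P i hP =>
    obtain ⟨b, hb, hP⟩ := hP
    refine ⟨b, hb, fun B hB h hh => ?_⟩
    rw [map_mul]
    exact hP B hB _ ((hφ i).aeBounded hB hh)

/-- The polynomials which the cube averages map to operators of size `O(1/n)`, uniformly on bounded
sets of functions. -/
def asymptoticIdeal (hψ : ∀ i, IsDunfordSchwartz μ (ψ (X i))) :
    Ideal (MvPolynomial (Fin d) ℝ) where
  carrier := {P | ∃ c : ℝ, ∀ n : ℕ, ∀ B : ℝ, 0 ≤ B → ∀ h, AEBounded B h →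
    AEBounded (c * B / (n + 1)) (ψ (cubeAverage d n * P) h)}
  zero_mem' := by
    refine ⟨0, fun n B _ h hh => ?_⟩
    simpa using hh.smul 0
  add_mem' := by
    rintro P Q ⟨b, hP⟩ ⟨c, hQ⟩
    refine ⟨b + c, fun n B hB h hh => ?_⟩
    rw [mul_add, map_add, add_mul, add_div]
    exact (hP n B hB h hh).add (hQ n B hB h hh)
  smul_mem' := by
    rintro Q P ⟨c, hP⟩
    obtain ⟨b, hb, hQ⟩ := exists_aeBounded_map hψ Q
    refine ⟨c * b, fun n B hB h hh => ?_⟩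
    rw [smul_eq_mul, mul_comm Q P, ← mul_assoc, map_mul, mul_assoc c]
    exact hP n (b * B) (mul_nonneg hb hB) _ (hQ B hB h hh)

theorem X_sub_one_mem_asymptoticIdeal (hψ : ∀ i, IsDunfordSchwartz μ (ψ (X i))) (i : Fin d) :
    X i - C 1 ∈ asymptoticIdeal hψ := by
  refine ⟨2, fun n B hB h hh => ?_⟩
  set g := ψ (∏ j ∈ Finset.univ.erase i, Polynomial.aeval (X j) (uniformPoly n)) h
  have hg : AEBounded B g :=
    (isDunfordSchwartz_map_prod _ fun j =>
      isDunfordSchwartz_map_aeval_uniformPoly hψ j n).aeBounded hB hh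
  have hsplit : ψ (cubeAverage d n * (X i - C 1)) h
      = ((n : ℝ) + 1)⁻¹ • ((ψ (X i) ^ (n + 1)) g - g) := by
    rw [cubeAverage_mul_X_sub_one, ← smul_eq_C_mul, map_smul, map_mul, map_sub, map_pow, map_one]
    rfl
  rw [hsplit]
  refine (((((hψ i).pow (n + 1)).aeBounded hB hg).sub hg).smul _).mono (le_of_eq ?_)
  rw [abs_of_nonneg (by positivity)]
  ring

theorem isAsymptoticallyInvariant_cubeAverage (hψ : ∀ i, IsDunfordSchwartz μ (ψ (X i))) :
    IsAsymptoticallyInvariant fun n => ψ (cubeAverage d n) := by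
  intro p
  have hmem := sub_C_eval_mem_of_X_sub_C_mem (a := 1) (X_sub_one_mem_asymptoticIdeal hψ)
    (cubeAverage d p)
  rw [cubeAverage, eval_one_tensorPower, eval_one_uniformPoly, one_pow] at hmem
  obtain ⟨c, hc⟩ := neg_mem hmem
  refine ⟨c, fun n B hB h hh => ?_⟩
  have hbound := hc n B hB h hh
  rwa [neg_sub, map_mul, map_sub, C_1, map_one] at hbound

theorem auCauchy_cubeAverage (hψ : ∀ i, IsDunfordSchwartz μ (ψ (X i))) (f : Lp ℝ 1 μ) :
    AuCauchy μ fun n => ψ (cubeAverage d n) f := by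
  obtain ⟨C, hC0, hC⟩ := exists_hasWeakType_cubeAverage hψ
  exact auCauchy_of_hasWeakType (isDunfordSchwartz_map_cubeAverage hψ) hC0 hC
    (isAsymptoticallyInvariant_cubeAverage hψ) f

end AsymptoticInvariance

section AlmostUniform

variable {μ : Measure Ω}

theorem measure_union_le_ofReal_of_half {s t : Set Ω} {ε : ℝ} (hε : 0 ≤ ε)
    (hs : μ s ≤ ENNReal.ofReal (ε / 2)) (ht : μ t ≤ ENNReal.ofReal (ε / 2)) :
    μ (s ∪ t) ≤ ENNReal.ofReal ε := by
  rw [← add_halves ε, ENNReal.ofReal_add (by positivity) (by positivity)]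
  exact (measure_union_le _ _).trans (add_le_add hs ht)

theorem exists_measure_lt_abs_le (f : Lp ℝ 1 μ) {ε : ℝ} (hε : 0 < ε) :
    ∃ R : ℝ, 0 < R ∧ μ {ω | R < |f ω|} ≤ ENNReal.ofReal ε := by
  refine ⟨(‖f‖ + 1) / ε, by positivity, ?_⟩
  calc μ {ω | (‖f‖ + 1) / ε < |f ω|} ≤ μ {ω | (‖f‖ + 1) / ε ≤ |f ω|} :=
        measure_mono fun _ (h : _ < |f _|) => le_of_lt h
    _ ≤ ENNReal.ofReal ((∫ ω, |f ω| ∂μ) / ((‖f‖ + 1) / ε)) :=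
        measure_ge_le_ofReal_integral_div (L1.integrable_coeFn f).abs
          (.of_forall fun _ => abs_nonneg _) (by positivity)
    _ ≤ ENNReal.ofReal ε := by
        refine ENNReal.ofReal_le_ofReal ?_
        have hnorm : ∫ ω, |f ω| ∂μ = ‖f‖ := (L1.norm_eq_integral_norm f).symm
        rw [hnorm, div_le_iff₀ (by positivity), mul_div_cancel₀ _ hε.ne']
        exact le_add_of_nonneg_right zero_le_one

theorem eLpNormEssSup_le_iff_ae_le {E : Type*} [ENorm E] {f : Ω → E} {c : ℝ≥0∞} :
    eLpNormEssSup f μ ≤ c ↔ ∀ᵐ ω ∂μ, ‖f ω‖ₑ ≤ c :=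
  ⟨fun h => ae_le_eLpNormEssSup.mono fun _ hω => hω.trans h, eLpNormEssSup_le_of_ae_enorm_bound⟩

section AuTendsto

variable {ι κ : Type*} {l : Filter ι} {F G H : ι → Ω →ₘ[μ] ℝ} {f g : Ω →ₘ[μ] ℝ}

theorem auTendsto_iff : AuTendsto μ l F f ↔ ∀ ε : ℝ, 0 < ε → ∃ E : Set Ω, MeasurableSet E ∧
    μ Eᶜ ≤ ENNReal.ofReal ε ∧
      ∀ lam : ℝ, 0 < lam → ∀ᶠ i in l, ∀ᵐ ω ∂μ, ω ∈ E → |F i ω - f ω| ≤ lam := by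
  have hbound : ∀ (E : Set Ω) (i : ι) {lam : ℝ}, 0 ≤ lam →
      (eLpNorm (E.indicator (F i - f)) ⊤ μ ≤ ENNReal.ofReal lam
        ↔ ∀ᵐ ω ∂μ, ω ∈ E → |F i ω - f ω| ≤ lam) := by
    intro E i lam hlam
    rw [eLpNorm_exponent_top, eLpNormEssSup_le_iff_ae_le]
    refine eventually_congr ?_
    filter_upwards [AEEqFun.coeFn_sub (F i) f] with ω hsub
    by_cases hω : ω ∈ E
    · simp [hω, hsub, Real.enorm_eq_ofReal_abs, ENNReal.ofReal_le_ofReal_iff hlam]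
    · simp [hω]
  refine forall₂_congr fun ε _ => exists_congr fun E => and_congr_right' (and_congr_right' ?_)
  rw [ENNReal.tendsto_nhds_zero]
  refine ⟨fun h lam hlam => ?_, fun h η hη => ?_⟩
  · filter_upwards [h _ (ENNReal.ofReal_pos.2 hlam)] with i hi using (hbound E i hlam.le).1 hi
  · obtain ⟨r, hr, hrη⟩ := ENNReal.lt_iff_exists_nnreal_btwn.1 hη
    filter_upwards [h r (by exact_mod_cast hr)] with i hi
    exact ((hbound E i r.2).2 hi).trans (by simpa using hrη.le)

theorem auTendsto_congr (hFG : ∀ᶠ i in l, F i = G i) : AuTendsto μ l F f ↔ AuTendsto μ l G f :=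
  forall₂_congr fun _ _ => exists_congr fun E => and_congr_right' <| and_congr_right' <|
    tendsto_congr' <| hFG.mono fun _ h => by simp only [h]

namespace AuTendsto

theorem comp {u : κ → ι} {l' : Filter κ} (hF : AuTendsto μ l F f) (hu : Tendsto u l' l) :
    AuTendsto μ l' (fun i => F (u i)) f := fun ε hε => by
  obtain ⟨E, hE, hEε, hlim⟩ := hF ε hε
  exact ⟨E, hE, hEε, hlim.comp hu⟩

theorem sub (hF : AuTendsto μ l F f) (hG : AuTendsto μ l G g) :
    AuTendsto μ l (fun i => F i - G i) (f - g) := by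
  rw [auTendsto_iff] at *
  intro ε hε
  obtain ⟨D, hD, hDε, hF⟩ := hF (ε / 2) (by positivity)
  obtain ⟨E, hE, hEε, hG⟩ := hG (ε / 2) (by positivity)
  refine ⟨D ∩ E, hD.inter hE, ?_, fun lam hlam => ?_⟩
  · rw [compl_inter]
    exact measure_union_le_ofReal_of_half hε.le hDε hEε
  filter_upwards [hF (lam / 2) (by positivity), hG (lam / 2) (by positivity)] with i hF hG
  filter_upwards [hF, hG, AEEqFun.coeFn_sub (F i) (G i), AEEqFun.coeFn_sub f g]
    with ω hF hG hFG hfg hω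
  rw [hFG, hfg, Pi.sub_apply, Pi.sub_apply, sub_sub_sub_comm]
  linarith [abs_sub (F i ω - f ω) (G i ω - g ω), hF hω.1, hG hω.2]

theorem squeeze (hF : AuTendsto μ l F f) (hH : AuTendsto μ l H f) (hFG : ∀ᶠ i in l, F i ≤ G i)
    (hGH : ∀ᶠ i in l, G i ≤ H i) : AuTendsto μ l G f := by
  rw [auTendsto_iff] at *
  intro ε hε
  obtain ⟨D, hD, hDε, hF⟩ := hF (ε / 2) (by positivity)
  obtain ⟨E, hE, hEε, hH⟩ := hH (ε / 2) (by positivity)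
  refine ⟨D ∩ E, hD.inter hE, ?_, fun lam hlam => ?_⟩
  · rw [compl_inter]
    exact measure_union_le_ofReal_of_half hε.le hDε hEε
  filter_upwards [hF lam hlam, hH lam hlam, hFG, hGH] with i hF hH hFG hGH
  filter_upwards [hF, hH, AEEqFun.coeFn_le.2 hFG, AEEqFun.coeFn_le.2 hGH] with ω hF hH hFG hGH hω
  have hF := abs_le.1 (hF hω.1)
  have hH := abs_le.1 (hH hω.2)
  exact abs_le.2 ⟨by linarith, by linarith⟩

theorem smul {r : ι → ℝ} {c : ℝ} {f : Lp ℝ 1 μ} (hr : Tendsto r l (𝓝 c))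
    (hF : AuTendsto μ l F f) : AuTendsto μ l (fun i => r i • F i) (c • (f : Ω →ₘ[μ] ℝ)) := by
  rw [auTendsto_iff] at *
  intro ε hε
  obtain ⟨R, hR, hfR⟩ := exists_measure_lt_abs_le f (half_pos hε)
  obtain ⟨E, hE, hEε, hF⟩ := hF (ε / 2) (by positivity)
  have hf := (Lp.stronglyMeasurable f).measurable
  refine ⟨E ∩ {ω | R < |f ω|}ᶜ, hE.inter (measurableSet_lt measurable_const hf.abs).compl, ?_,
    fun lam hlam => ?_⟩
  · rw [compl_inter, compl_compl]
    exact measure_union_le_ofReal_of_half hε.le hEε hfR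
  filter_upwards [hF (lam / (2 * (|c| + 1))) (by positivity),
    hr.abs.eventually_le_const (lt_add_one _),
    Metric.tendsto_nhds.1 hr (lam / (2 * R)) (by positivity)] with i hF hrc hrR
  filter_upwards [hF, AEEqFun.coeFn_smul (r i) (F i), AEEqFun.coeFn_smul c (f : Ω →ₘ[μ] ℝ)]
    with ω hF hrF hcf ⟨hωE, hωR⟩
  have hωR : |f ω| ≤ R := not_lt.1 hωR
  rw [hrF, hcf, Pi.smul_apply, Pi.smul_apply, smul_eq_mul, smul_eq_mul]
  calc |r i * F i ω - c * f ω| = |r i * (F i ω - f ω) + (r i - c) * f ω| := by ring_nf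
    _ ≤ |r i| * |F i ω - f ω| + |r i - c| * |f ω| := by
        simpa only [abs_mul] using abs_add_le (r i * (F i ω - f ω)) ((r i - c) * f ω)
    _ ≤ (|c| + 1) * (lam / (2 * (|c| + 1))) + lam / (2 * R) * R := by
        gcongr
        · exact hF hωE
        · exact hrR.le
    _ = lam := by
        field_simp
        ring

end AuTendsto

theorem auTendsto_add_atTop_iff_nat {F : ℕ → Ω →ₘ[μ] ℝ} (k : ℕ) :
    AuTendsto μ atTop (fun n => F (n + k)) f ↔ AuTendsto μ atTop F f :=
  forall₂_congr fun _ _ => exists_congr fun E => and_congr_right' <| and_congr_right' <|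
    tendsto_add_atTop_iff_nat (f := fun n => eLpNorm (E.indicator (F n - f)) ⊤ μ) k

end AuTendsto

theorem auTendsto_of_monotone {d : ℕ} {I : ℝ → Lp ℝ 1 μ} {g : Lp ℝ 1 μ} (hI : Monotone I)
    (hg : AuTendsto μ atTop (fun n : ℕ => (((n : ℝ) ^ d)⁻¹ • I n : Lp ℝ 1 μ)) g) :
    AuTendsto μ atTop (fun t : ℝ => ((t ^ d)⁻¹ • I t : Lp ℝ 1 μ)) g := by
  have hrescale : ∀ u : ℝ → ℕ, Tendsto u atTop atTop →
      Tendsto (fun t : ℝ => (u t : ℝ) / t) atTop (𝓝 1) →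
      AuTendsto μ atTop (fun t : ℝ => ((t ^ d)⁻¹ • I (u t) : Lp ℝ 1 μ)) g := by
    intro u hu hut
    have hg := AuTendsto.smul (hut.pow d) (hg.comp hu)
    rw [one_pow, one_smul] at hg
    refine (auTendsto_congr ?_).1 hg
    filter_upwards [hu.eventually_ne_atTop 0] with t hut
    have hut : (u t : ℝ) ≠ 0 := Nat.cast_ne_zero.2 hut
    have hsmul : ((u t : ℝ) / t) ^ d • (((u t : ℝ) ^ d)⁻¹ • I (u t)) = (t ^ d)⁻¹ • I (u t) := by
      rw [smul_smul, div_pow, div_mul_eq_mul_div, mul_inv_cancel₀ (pow_ne_zero d hut), one_div]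
    exact congrArg Subtype.val hsmul
  have hfloor : Tendsto (fun t : ℝ => (⌊t⌋₊ : ℝ) / t) atTop (𝓝 1) := tendsto_nat_floor_div_atTop
  have hsucc : Tendsto (fun t : ℝ => ((⌊t⌋₊ + 1 : ℕ) : ℝ) / t) atTop (𝓝 1) := by
    simpa [add_div] using hfloor.add tendsto_inv_atTop_zero
  refine (hrescale _ tendsto_nat_floor_atTop hfloor).squeeze
    (hrescale _ ((tendsto_add_atTop_nat 1).comp tendsto_nat_floor_atTop) hsucc) ?_ ?_
  all_goals
    filter_upwards [eventually_ge_atTop 0] with t ht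
    refine smul_le_smul_of_nonneg_left (α := ℝ) (β := Lp ℝ 1 μ) (hI ?_) (by positivity)
  · exact Nat.floor_le ht
  · exact_mod_cast (Nat.lt_floor_add_one t).le

namespace AuCauchy

variable {F : ℕ → Ω → ℝ} {g : Ω → ℝ}

theorem ae_exists_tendsto (hF : AuCauchy μ F) :
    ∀ᵐ ω ∂μ, ∃ x, Tendsto (fun n => F n ω) atTop (𝓝 x) := by
  have hcauchy : ∀ lam : ℝ, 0 < lam → ∀ᵐ ω ∂μ, ∃ N x, ∀ n ≥ N, |F n ω - x| ≤ lam := by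
    intro lam hlam
    rw [ae_iff, ← nonpos_iff_eq_zero]
    refine ENNReal.le_of_forall_pos_le_add fun ε hε _ => ?_
    obtain ⟨N, g, hg⟩ := hF ε lam hε hlam
    rw [zero_add, ← ENNReal.ofReal_coe_nnreal]
    refine (measure_mono fun ω hω => ?_).trans hg
    simp only [mem_ofPred_eq] at hω ⊢
    push Not at hω
    exact hω N (g ω)
  filter_upwards [ae_all_iff.2 fun k : ℕ => hcauchy (1 / (k + 1)) (by positivity)] with ω hω
  refine cauchySeq_tendsto_of_complete (Metric.cauchySeq_iff.2 fun ε hε => ?_)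
  obtain ⟨k, hk⟩ := exists_nat_one_div_lt (half_pos hε)
  obtain ⟨N, x, hN⟩ := hω k
  refine ⟨N, fun m hm n hn => ?_⟩
  rw [← add_halves ε]
  exact (dist_triangle_right _ _ x).trans_lt
    (add_lt_add ((hN m hm).trans_lt hk) ((hN n hn).trans_lt hk))

theorem exists_measure_lt_abs_sub_le (hF : AuCauchy μ F)
    (hg : ∀ᵐ ω ∂μ, Tendsto (fun n => F n ω) atTop (𝓝 (g ω))) {ε lam : ℝ} (hε : 0 < ε)
    (hlam : 0 < lam) : ∃ N, μ {ω | ∃ n ≥ N, lam < |F n ω - g ω|} ≤ ENNReal.ofReal ε := by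
  obtain ⟨N, G, hG⟩ := hF ε (lam / 2) hε (half_pos hlam)
  refine ⟨N, (measure_mono_ae ?_).trans hG⟩
  filter_upwards [hg] with ω hω
  rintro ⟨n, hn, hlt⟩
  by_contra hcon
  have hcon : ∀ m ≥ N, |F m ω - G ω| ≤ lam / 2 :=
    fun m hm => not_lt.1 fun hlt => hcon ⟨m, hm, hlt⟩
  have hlim : |g ω - G ω| ≤ lam / 2 :=
    le_of_tendsto (hω.sub_const _).abs (eventually_atTop.2 ⟨N, hcon⟩)
  linarith [abs_sub_le (F n ω) (G ω) (g ω), hcon n hn, abs_sub_comm (g ω) (G ω)]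

theorem exists_tendstoUniformlyOn (hF : AuCauchy μ F)
    (hg : ∀ᵐ ω ∂μ, Tendsto (fun n => F n ω) atTop (𝓝 (g ω))) {ε : ℝ} (hε : 0 < ε) :
    ∃ E, MeasurableSet E ∧ μ Eᶜ ≤ ENNReal.ofReal ε ∧ TendstoUniformlyOn F g atTop E := by
  choose N hN using fun j : ℕ => hF.exists_measure_lt_abs_sub_le hg
    (ε := ε / 2 / 2 ^ j) (lam := 1 / (j + 1)) (by positivity) (by positivity)
  set S : Set Ω := ⋃ j : ℕ, {ω | ∃ n ≥ N j, 1 / ((j : ℝ) + 1) < |F n ω - g ω|}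
  have hS : μ S ≤ ENNReal.ofReal ε := by
    refine (measure_iUnion_le _).trans ((ENNReal.tsum_le_tsum hN).trans_eq ?_)
    have hsum := hasSum_geometric_two' ε
    rw [← ENNReal.ofReal_tsum_of_nonneg (fun _ => by positivity) hsum.summable, hsum.tsum_eq]
  refine ⟨(toMeasurable μ S)ᶜ, (measurableSet_toMeasurable μ S).compl, ?_, ?_⟩
  · rwa [compl_compl, measure_toMeasurable]
  refine Metric.tendstoUniformlyOn_iff.2 fun δ hδ => ?_
  obtain ⟨j, hj⟩ := exists_nat_one_div_lt hδ
  filter_upwards [eventually_ge_atTop (N j)] with n hn ω hω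
  rw [dist_comm]
  refine lt_of_le_of_lt (not_lt.1 fun hlt => hω (subset_toMeasurable μ S ?_)) hj
  exact mem_iUnion.2 ⟨j, n, hn, hlt⟩

theorem exists_auTendsto {F : ℕ → Lp ℝ 1 μ} {C : ℝ} (hF : AuCauchy μ fun n => F n)
    (hC : ∀ n, ‖F n‖ ≤ C) :
    ∃ g : Lp ℝ 1 μ, AuTendsto μ atTop (fun n => (F n : Ω →ₘ[μ] ℝ)) g := by
  have hmeas : ∀ n, AEStronglyMeasurable (F n) μ := fun n => Lp.aestronglyMeasurable _
  obtain ⟨g, hg, hlim⟩ := exists_stronglyMeasurable_limit_of_tendsto_ae hmeas hF.ae_exists_tendsto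
  have hgL1 : MemLp g 1 μ := by
    refine ⟨hg.aestronglyMeasurable,
      (Lp.eLpNorm_lim_le_liminf_eLpNorm (p := 1) hmeas g hlim).trans_lt ?_⟩
    refine lt_of_le_of_lt (liminf_le_of_frequently_le' (.of_forall fun n => ?_))
      (ENNReal.ofReal_lt_top (r := C))
    rw [← ENNReal.ofReal_toReal (Lp.eLpNorm_ne_top (F n)), ← Lp.norm_def]
    exact ENNReal.ofReal_le_ofReal (hC n)
  refine ⟨hgL1.toLp g, auTendsto_iff.2 fun ε hε => ?_⟩
  obtain ⟨E, hE, hEε, hunif⟩ := hF.exists_tendstoUniformlyOn hlim hε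
  refine ⟨E, hE, hEε, fun lam hlam => ?_⟩
  filter_upwards [Metric.tendstoUniformlyOn_iff.1 hunif lam hlam] with n hn
  filter_upwards [hgL1.coeFn_toLp] with ω hgω hω
  rw [hgω, abs_sub_comm]
  exact (hn ω hω).le

end AuCauchy

end AlmostUniform

section UnitCells

variable {d : ℕ}

/-- The cube `(0, t]^d`. -/
def cube (d : ℕ) (t : ℝ) : Set (Fin d → ℝ) := univ.pi fun _ => Ioc 0 t

/-- The half-open unit cube with lower corner `k`. -/
def unitCell (k : Fin d → ℕ) : Set (Fin d → ℝ) := univ.pi fun i => Ioc (k i : ℝ) (k i + 1)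

theorem pos_of_mem_cube {t : ℝ} {u : Fin d → ℝ} (hu : u ∈ cube d t) (i : Fin d) : 0 < u i :=
  (hu i (mem_univ i)).1

theorem measurableSet_cube (t : ℝ) : MeasurableSet (cube d t) :=
  .univ_pi fun _ => measurableSet_Ioc

theorem cube_mono : Monotone (cube d) :=
  fun _ _ hst => pi_mono fun _ _ => Ioc_subset_Ioc_right hst

theorem volume_cube_lt_top (t : ℝ) : volume (cube d t) < ∞ := by
  rw [cube, Real.volume_pi_Ioc]
  exact ENNReal.prod_lt_top fun _ _ => ENNReal.ofReal_lt_top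

theorem mem_unitCell_iff {k : Fin d → ℕ} {u : Fin d → ℝ} :
    u ∈ unitCell k ↔ ∀ i, ⌈u i⌉₊ = k i + 1 := by
  simp [unitCell, Nat.ceil_eq_iff]

theorem measurableSet_unitCell (k : Fin d → ℕ) : MeasurableSet (unitCell k) :=
  .univ_pi fun _ => measurableSet_Ioc

theorem pairwise_disjoint_unitCell :
    Pairwise (Function.onFun Disjoint (unitCell : (Fin d → ℕ) → Set (Fin d → ℝ))) := by
  refine fun k l hkl => Set.disjoint_left.2 fun u hk hl => hkl (funext fun i => ?_)
  exact Nat.succ_injective ((mem_unitCell_iff.1 hk i).symm.trans (mem_unitCell_iff.1 hl i))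

theorem cube_eq_biUnion_unitCell (n : ℕ) :
    cube d n = ⋃ k ∈ Fintype.piFinset fun _ : Fin d => Finset.range n, unitCell k := by
  ext u
  simp only [cube, mem_univ_pi, mem_Ioc, mem_iUnion, mem_unitCell_iff, Fintype.mem_piFinset,
    Finset.mem_range, exists_prop, ← Nat.ceil_pos (a := u _), ← Nat.ceil_le]
  refine ⟨fun h => ⟨fun i => ⌈u i⌉₊ - 1, fun i => ?_, fun i => ?_⟩, fun ⟨k, hk, hu⟩ i => ?_⟩
  · have := h i
    change ⌈u i⌉₊ - 1 < n
    omega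
  · have := h i
    change ⌈u i⌉₊ = ⌈u i⌉₊ - 1 + 1
    omega
  · have := hk i
    have := hu i
    omega

theorem preimage_add_unitCell (k : Fin d → ℕ) :
    (fun u : Fin d → ℝ => (fun i => (k i : ℝ)) + u) ⁻¹' unitCell k = cube d 1 := by
  ext u
  simp [unitCell, cube]

end UnitCells

theorem cubeAverage_eq_smul_sum (d n : ℕ) :
    cubeAverage d n = (((n + 1 : ℕ) : ℝ) ^ d)⁻¹ • ∑ k ∈ Fintype.piFinset fun _ : Fin d =>
      Finset.range (n + 1), MvPolynomial.monomial (Finsupp.equivFunOnFinite.symm k) 1 := by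
  have hdeg : (uniformPoly n).natDegree < n + 1 :=
    Nat.lt_succ_of_le <| Polynomial.natDegree_le_iff_coeff_eq_zero.2 fun k hk => by
      rw [coeff_uniformPoly, if_neg hk.not_ge]
  rw [cubeAverage, tensorPower_eq_sum d hdeg, Finset.smul_sum]
  refine Finset.sum_congr rfl fun k hk => ?_
  have hk : ∀ i, k i ≤ n := fun i => Nat.lt_succ_iff.1 (Finset.mem_range.1
    (Fintype.mem_piFinset.1 hk i))
  simp [coeff_uniformPoly, hk, MvPolynomial.smul_monomial]

/-- A semigroup of Dunford–Schwartz operators on `L¹(μ)` indexed by `ℝ₊^d`, strongly continuous in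
the interior. The values outside `ℝ₊^d` are junk, and `S 0` need not be the identity. -/
structure IsDunfordSchwartzFlow (μ : Measure Ω) {d : ℕ}
    (S : (Fin d → ℝ) → Lp ℝ 1 μ →L[ℝ] Lp ℝ 1 μ) : Prop where
  isDunfordSchwartz : ∀ u, 0 ≤ u → IsDunfordSchwartz μ (S u)
  map_add : ∀ u v, 0 ≤ u → 0 ≤ v → S (u + v) = S u * S v
  continuousOn : ∀ f, ContinuousOn (fun u => S u f) {u | ∀ i, 0 < u i}

namespace IsDunfordSchwartzFlow

variable {μ : Measure Ω} {d : ℕ} {S : (Fin d → ℝ) → Lp ℝ 1 μ →L[ℝ] Lp ℝ 1 μ}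

theorem isDunfordSchwartz_of_mem_cube (hS : IsDunfordSchwartzFlow μ S) {t : ℝ} {u : Fin d → ℝ}
    (hu : u ∈ cube d t) : IsDunfordSchwartz μ (S u) :=
  hS.isDunfordSchwartz u fun i => (pos_of_mem_cube hu i).le

theorem integrableOn_cube (hS : IsDunfordSchwartzFlow μ S) (f : Lp ℝ 1 μ) (t : ℝ) :
    IntegrableOn (fun u => S u f) (cube d t) := by
  refine IntegrableOn.of_bound (volume_cube_lt_top t) (((hS.continuousOn f).mono
    fun u hu => pos_of_mem_cube hu).aestronglyMeasurable (measurableSet_cube t)) ‖f‖ ?_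
  exact ae_restrict_of_forall_mem (measurableSet_cube t) fun u hu =>
    (hS.isDunfordSchwartz_of_mem_cube hu).norm_le f

theorem monotone_integral_cube (hS : IsDunfordSchwartzFlow μ S) {f : Lp ℝ 1 μ} (hf : 0 ≤ f) :
    Monotone fun t => ∫ u in cube d t, S u f := by
  refine fun s t hst => setIntegral_mono_set (hS.integrableOn_cube f t) ?_
    (cube_mono hst).eventuallyLE
  exact ae_restrict_of_forall_mem (measurableSet_cube t) fun u hu =>
    (hS.isDunfordSchwartz_of_mem_cube hu).nonneg f hf

/-- The operators `S k` at lattice points as a homomorphism of monoids; `S 0` is replaced by the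
identity. -/
noncomputable def latticeHom (hS : IsDunfordSchwartzFlow μ S) :
    Multiplicative (Fin d →₀ ℕ) →* (Lp ℝ 1 μ →L[ℝ] Lp ℝ 1 μ) where
  toFun k := if k.toAdd = 0 then 1 else S fun i => (k.toAdd i : ℝ)
  map_one' := if_pos rfl
  map_mul' k l := by
    by_cases hk : k.toAdd = 0
    · simp [hk]
    by_cases hl : l.toAdd = 0
    · simp [hl]
    rw [if_neg hk, if_neg hl, if_neg (by simp [hk]), ← hS.map_add _ _ (fun i => Nat.cast_nonneg _)
      (fun i => Nat.cast_nonneg _)]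
    congr 1
    funext i
    simp

/-- The algebra homomorphism that substitutes the operators `S e_i` for the variables. -/
noncomputable def polynomialHom (hS : IsDunfordSchwartzFlow μ S) :
    MvPolynomial (Fin d) ℝ →ₐ[ℝ] Lp ℝ 1 μ →L[ℝ] Lp ℝ 1 μ :=
  AddMonoidAlgebra.lift ℝ _ _ hS.latticeHom

theorem polynomialHom_monomial (hS : IsDunfordSchwartzFlow μ S) (k : Fin d →₀ ℕ) :
    hS.polynomialHom (MvPolynomial.monomial k 1) = hS.latticeHom (.ofAdd k) :=
  (AddMonoidAlgebra.lift_single _ _ _).trans (one_smul _ _)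

theorem isDunfordSchwartz_latticeHom (hS : IsDunfordSchwartzFlow μ S)
    (k : Multiplicative (Fin d →₀ ℕ)) : IsDunfordSchwartz μ (hS.latticeHom k) := by
  change IsDunfordSchwartz μ (if k.toAdd = 0 then 1 else S fun i => (k.toAdd i : ℝ))
  split_ifs
  · exact .one
  · exact hS.isDunfordSchwartz _ fun i => Nat.cast_nonneg _

theorem isDunfordSchwartz_polynomialHom_X (hS : IsDunfordSchwartzFlow μ S) (i : Fin d) :
    IsDunfordSchwartz μ (hS.polynomialHom (MvPolynomial.X i)) := by
  rw [MvPolynomial.X, hS.polynomialHom_monomial]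
  exact hS.isDunfordSchwartz_latticeHom _

theorem integral_unitCell (hS : IsDunfordSchwartzFlow μ S) (f : Lp ℝ 1 μ) (k : Fin d →₀ ℕ) :
    ∫ u in unitCell k, S u f = hS.latticeHom (.ofAdd k) (∫ u in cube d 1, S u f) := by
  change _ = (if k = 0 then 1 else S fun i => (k i : ℝ) : Lp ℝ 1 μ →L[ℝ] Lp ℝ 1 μ) _
  split_ifs with hk
  · have hcell : unitCell k = cube d 1 := by simp [hk, unitCell, cube]
    rw [hcell, one_apply_eq_self]
  · rw [← (measurePreserving_add_left volume fun i => (k i : ℝ)).setIntegral_preimage_emb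
      (measurableEmbedding_addLeft _), preimage_add_unitCell,
      ← ContinuousLinearMap.integral_comp_comm _ (hS.integrableOn_cube f 1)]
    refine setIntegral_congr_fun (measurableSet_cube 1) fun u hu => ?_
    rw [hS.map_add _ _ (fun i => Nat.cast_nonneg _) fun i => (pos_of_mem_cube hu i).le]
    rfl

theorem smul_integral_cube_succ (hS : IsDunfordSchwartzFlow μ S) (f : Lp ℝ 1 μ) (n : ℕ) :
    (((n + 1 : ℕ) : ℝ) ^ d)⁻¹ • ∫ u in cube d (n + 1 : ℕ), S u f
      = hS.polynomialHom (cubeAverage d n) (∫ u in cube d 1, S u f) := by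
  have hsplit : ∫ u in cube d (n + 1 : ℕ), S u f
      = ∑ k ∈ Fintype.piFinset fun _ : Fin d => Finset.range (n + 1), ∫ u in unitCell k, S u f := by
    rw [cube_eq_biUnion_unitCell, integral_biUnion_finset _ fun k _ => measurableSet_unitCell k]
    · exact pairwise_disjoint_unitCell.set_pairwise _
    · intro k hk
      refine (hS.integrableOn_cube f (n + 1 : ℕ)).mono_set ?_
      rw [cube_eq_biUnion_unitCell]
      exact subset_biUnion_of_mem (u := unitCell) hk
  rw [hsplit, cubeAverage_eq_smul_sum, map_smul, map_sum, _root_.smul_apply, _root_.sum_apply]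
  congr 1
  refine Finset.sum_congr rfl fun k _ => ?_
  rw [hS.polynomialHom_monomial, ← hS.integral_unitCell]
  rfl

theorem exists_auTendsto_of_nonneg (hS : IsDunfordSchwartzFlow μ S) {f : Lp ℝ 1 μ} (hf : 0 ≤ f) :
    ∃ g : Lp ℝ 1 μ, AuTendsto μ atTop
      (fun t : ℝ => ((t ^ d)⁻¹ • ∫ u in cube d t, S u f : Lp ℝ 1 μ)) g := by
  have hX := hS.isDunfordSchwartz_polynomialHom_X
  obtain ⟨g, hg⟩ := (auCauchy_cubeAverage hX (∫ u in cube d 1, S u f)).exists_auTendsto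
    fun n => (isDunfordSchwartz_map_cubeAverage hX n).norm_le _
  refine ⟨g, auTendsto_of_monotone (hS.monotone_integral_cube hf) ?_⟩
  refine (auTendsto_add_atTop_iff_nat 1).1 ((auTendsto_congr (.of_forall fun n => ?_)).1 hg)
  exact congrArg Subtype.val (hS.smul_integral_cube_succ f n).symm

theorem exists_auTendsto (hS : IsDunfordSchwartzFlow μ S) (f : Lp ℝ 1 μ) :
    ∃ g : Lp ℝ 1 μ, AuTendsto μ atTop
      (fun t : ℝ => ((t ^ d)⁻¹ • ∫ u in cube d t, S u f : Lp ℝ 1 μ)) g := by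
  obtain ⟨g, hg⟩ := hS.exists_auTendsto_of_nonneg (posPart_nonneg f)
  obtain ⟨h, hh⟩ := hS.exists_auTendsto_of_nonneg (negPart_nonneg f)
  refine ⟨g - h, (auTendsto_congr (.of_forall fun t => ?_)).1 (hg.sub hh)⟩
  have hsub : ∫ u in cube d t, S u f
      = (∫ u in cube d t, S u f⁺) - ∫ u in cube d t, S u f⁻ := by
    rw [← integral_sub (hS.integrableOn_cube _ t) (hS.integrableOn_cube _ t)]
    simp only [← map_sub, posPart_sub_negPart]
  rw [hsub, smul_sub]
  rfl

end IsDunfordSchwartzFlow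

section LpOperators

variable {μ : Measure Ω}

theorem memL1pLinf_coe (f : Lp ℝ 1 μ) : MemL1pLinf μ (f : Ω →ₘ[μ] ℝ) := by
  refine ⟨f, 0, Lp.eLpNorm_ne_top f, ?_, (add_zero _).symm⟩
  rw [eLpNorm_congr_ae AEEqFun.coeFn_zero, eLpNorm_zero]
  exact ENNReal.zero_ne_top

namespace IsPosDS

variable {R : (Ω →ₘ[μ] ℝ) → (Ω →ₘ[μ] ℝ)}

/-- The contraction of `L¹(μ)` obtained by restricting a positive Dunford–Schwartz operator. -/
noncomputable def toL1 (hR : IsPosDS μ R) : Lp ℝ 1 μ →L[ℝ] Lp ℝ 1 μ :=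
  LinearMap.mkContinuous
    { toFun := fun f => ⟨R f, Lp.mem_Lp_iff_eLpNorm_lt_top.2
        ((hR.norm_one f (memL1pLinf_coe f)).trans_lt (Lp.eLpNorm_lt_top f))⟩
      map_add' := fun f g => Subtype.ext (hR.map_add f g (memL1pLinf_coe f) (memL1pLinf_coe g))
      map_smul' := fun c f => Subtype.ext (hR.map_smul c f (memL1pLinf_coe f)) }
    1 fun f => by
      rw [one_mul, Lp.norm_def, Lp.norm_def]
      exact ENNReal.toReal_mono (Lp.eLpNorm_ne_top f) (hR.norm_one f (memL1pLinf_coe f))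

theorem coe_toL1 (hR : IsPosDS μ R) (f : Lp ℝ 1 μ) : (hR.toL1 f : Ω →ₘ[μ] ℝ) = R f := rfl

theorem isDunfordSchwartz_toL1 (hR : IsPosDS μ R) : IsDunfordSchwartz μ hR.toL1 where
  nonneg f hf := hR.map_pos f (memL1pLinf_coe f) hf
  norm_le f := (hR.toL1.le_of_opNorm_le (LinearMap.mkContinuous_norm_le _ zero_le_one _) f).trans_eq
    (one_mul _)
  le_const c hc f hfc := by
    have hpos : eLpNorm (f⁺ : Lp ℝ 1 μ) ⊤ μ ≤ ENNReal.ofReal c := by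
      rw [eLpNorm_exponent_top, eLpNormEssSup_le_iff_ae_le]
      filter_upwards [hfc, Lp.coeFn_sup f 0, Lp.coeFn_zero ℝ 1 μ] with ω hfc hsup hzero
      rw [posPart_def, hsup, Pi.sup_apply, hzero, Pi.zero_apply,
        Real.enorm_eq_ofReal le_sup_right]
      exact ENNReal.ofReal_le_ofReal (sup_le hfc hc)
    have hmono : hR.toL1 f ≤ hR.toL1 f⁺ := by
      have hsub : 0 ≤ f⁺ - f := sub_nonneg.2 (le_posPart f)
      rw [← sub_nonneg, ← map_sub]
      exact hR.map_pos _ (memL1pLinf_coe _) hsub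
    have himage : ∀ᵐ ω ∂μ, ‖hR.toL1 f⁺ ω‖ₑ ≤ ENNReal.ofReal c :=
      eLpNormEssSup_le_iff_ae_le.1 <| eLpNorm_exponent_top.symm.trans_le
        ((hR.norm_top _ (memL1pLinf_coe f⁺)).trans hpos)
    filter_upwards [himage, AEEqFun.coeFn_le.2 hmono] with ω hω hle
    rw [Real.enorm_eq_ofReal_abs, ENNReal.ofReal_le_ofReal_iff hc] at hω
    exact hle.trans ((le_abs_self _).trans hω)

end IsPosDS

variable {d : ℕ} {T : (Fin d → ℝ) → (Ω →ₘ[μ] ℝ) → (Ω →ₘ[μ] ℝ)}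

/-- The operators on `L¹(μ)` of a family `T` of positive Dunford–Schwartz operators indexed by
`ℝ₊^d`, extended to `ℝ^d` by `u ↦ u⁺`. -/
noncomputable def flowL1 (hDS : ∀ u : Fin d → ℝ, 0 ≤ u → IsPosDS μ (T u)) (u : Fin d → ℝ) :
    Lp ℝ 1 μ →L[ℝ] Lp ℝ 1 μ :=
  (hDS u⁺ (posPart_nonneg u)).toL1

theorem coe_flowL1 (hDS : ∀ u : Fin d → ℝ, 0 ≤ u → IsPosDS μ (T u)) {u : Fin d → ℝ} (hu : 0 ≤ u)
    (f : Lp ℝ 1 μ) : (flowL1 hDS u f : Ω →ₘ[μ] ℝ) = T u f := by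
  rw [flowL1, IsPosDS.coe_toL1, posPart_eq_self.2 hu]

theorem isDunfordSchwartzFlow_flowL1 (hDS : ∀ u : Fin d → ℝ, 0 ≤ u → IsPosDS μ (T u))
    (hsemi : ∀ u v : Fin d → ℝ, 0 ≤ u → 0 ≤ v →
      ∀ f : Ω →ₘ[μ] ℝ, MemL1pLinf μ f → T (u + v) f = T u (T v f))
    (hcont : ∀ f : Ω →ₘ[μ] ℝ, eLpNorm f 1 μ ≠ ∞ → ∀ v : Fin d → ℝ, (∀ i, 0 < v i) →
      Tendsto (fun u => eLpNorm (⇑(T u f - T v f)) 1 μ)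
        (𝓝[{u : Fin d → ℝ | 0 ≤ u}] v) (𝓝 0)) :
    IsDunfordSchwartzFlow μ (flowL1 hDS) where
  isDunfordSchwartz u _ := (hDS u⁺ (posPart_nonneg u)).isDunfordSchwartz_toL1
  map_add u v hu hv := by
    refine ContinuousLinearMap.ext fun f => Subtype.ext ?_
    rw [coe_flowL1 hDS (add_nonneg hu hv), hsemi u v hu hv f (memL1pLinf_coe f),
      ← coe_flowL1 hDS hv, ← coe_flowL1 hDS hu, mul_apply_eq_comp]
  continuousOn f v hv := by
    have hsub : {u : Fin d → ℝ | ∀ i, 0 < u i} ⊆ {u | 0 ≤ u} := fun u hu i => (hu i).le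
    refine tendsto_iff_edist_tendsto_0.2 <| Tendsto.congr' ?_ <|
      (hcont f (Lp.eLpNorm_ne_top f) v hv).mono_left (nhdsWithin_mono v hsub)
    filter_upwards [self_mem_nhdsWithin] with u hu
    rw [Lp.edist_def, ← coe_flowL1 hDS (hsub hu), ← coe_flowL1 hDS (hsub hv)]
    exact eLpNorm_congr_ae (AEEqFun.coeFn_sub _ _)

end LpOperators

theorem flow_averages_au_L1_general (μ : Measure Ω) {d : ℕ}
    (T : (Fin d → ℝ) → (Ω →ₘ[μ] ℝ) → (Ω →ₘ[μ] ℝ))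
    (hDS : ∀ u : Fin d → ℝ, 0 ≤ u → IsPosDS μ (T u))
    (hsemi : ∀ u v : Fin d → ℝ, 0 ≤ u → 0 ≤ v →
      ∀ f : Ω →ₘ[μ] ℝ, MemL1pLinf μ f → T (u + v) f = T u (T v f))
    (hcont : ∀ f : Ω →ₘ[μ] ℝ, eLpNorm f 1 μ ≠ ∞ → ∀ v : Fin d → ℝ, (∀ i, 0 < v i) →
      Tendsto (fun u => eLpNorm (⇑(T u f - T v f)) 1 μ)
        (𝓝[{u : Fin d → ℝ | 0 ≤ u}] v) (𝓝 0))
    (f : Ω →ₘ[μ] ℝ) (hf : eLpNorm f 1 μ ≠ ∞)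
    (F : (Fin d → ℝ) → Lp ℝ 1 μ) (hF : ∀ u : Fin d → ℝ, 0 ≤ u → (F u : Ω →ₘ[μ] ℝ) = T u f) :
    ∃ fhat : Ω →ₘ[μ] ℝ, eLpNorm fhat 1 μ ≠ ∞ ∧
      AuTendsto μ atTop
        (fun t : ℝ => (t ^ d)⁻¹ •
          ((∫ u in Set.univ.pi fun _ : Fin d => Set.Ioc (0 : ℝ) t, F u : Lp ℝ 1 μ) :
            Ω →ₘ[μ] ℝ))
        fhat := by
  let f₁ : Lp ℝ 1 μ := ⟨f, Lp.mem_Lp_iff_eLpNorm_lt_top.2 hf.lt_top⟩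
  have hFlow : ∀ u, 0 ≤ u → F u = flowL1 hDS u f₁ := fun u hu =>
    Subtype.ext ((hF u hu).trans (coe_flowL1 hDS hu f₁).symm)
  have hint : ∀ t : ℝ, ∫ u in cube d t, F u = ∫ u in cube d t, flowL1 hDS u f₁ := fun t =>
    setIntegral_congr_fun (measurableSet_cube t) fun u hu =>
      hFlow u fun i => (pos_of_mem_cube hu i).le
  obtain ⟨g, hg⟩ := (isDunfordSchwartzFlow_flowL1 hDS hsemi hcont).exists_auTendsto f₁
  refine ⟨g, Lp.eLpNorm_ne_top g, (auTendsto_congr (.of_forall fun t => ?_)).1 hg⟩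
  rw [← hint]
  rfl

/-- **Commutative case of Theorem 5.10**: let `{T_u : u ∈ ℝ₊^d}` be a semigroup of
positive Dunford–Schwartz operators which is `L¹`-continuous in the interior of `ℝ₊^d`.
Then for every `f ∈ L¹(μ)` the averages `A_t(f) = t^{-d} ∫_{(0,t]^d} T_u(f) du`
(a Bochner integral in `L¹(μ)`, encoded by the lift `F u = T_u f ∈ L¹`) converge
almost uniformly as `t → ∞` to some `f̂ ∈ L¹(μ)`. -/
theorem flow_averages_au_L1 (μ : Measure Ω) [SigmaFinite μ] {d : ℕ}
    (T : (Fin d → ℝ) → (Ω →ₘ[μ] ℝ) → (Ω →ₘ[μ] ℝ))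
    (hDS : ∀ u : Fin d → ℝ, 0 ≤ u → IsPosDS μ (T u))
    (hsemi : ∀ u v : Fin d → ℝ, 0 ≤ u → 0 ≤ v →
      ∀ f : Ω →ₘ[μ] ℝ, MemL1pLinf μ f → T (u + v) f = T u (T v f))
    (hcont : ∀ f : Ω →ₘ[μ] ℝ, eLpNorm f 1 μ ≠ ∞ → ∀ v : Fin d → ℝ, (∀ i, 0 < v i) →
      Tendsto (fun u => eLpNorm (⇑(T u f - T v f)) 1 μ)
        (𝓝[{u : Fin d → ℝ | 0 ≤ u}] v) (𝓝 0))
    (f : Ω →ₘ[μ] ℝ) (hf : eLpNorm f 1 μ ≠ ∞)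
    (F : (Fin d → ℝ) → Lp ℝ 1 μ) (hF : ∀ u : Fin d → ℝ, 0 ≤ u → (F u : Ω →ₘ[μ] ℝ) = T u f) :
    ∃ fhat : Ω →ₘ[μ] ℝ, eLpNorm fhat 1 μ ≠ ∞ ∧
      AuTendsto μ atTop
        (fun t : ℝ => (t ^ d)⁻¹ •
          ((∫ u in Set.univ.pi fun _ : Fin d => Set.Ioc (0 : ℝ) t, F u : Lp ℝ 1 μ) :
            Ω →ₘ[μ] ℝ))
        fhat :=
  flow_averages_au_L1_general μ T hDS hsemi hcont f hf F hF
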